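/- Let M : ℝ² → ℝ be smooth with all partial derivatives up to order 9 square-integrable on ℝ², and let Ω := {x∈ℝ³ : x₁ > M(x₂,x₃)}. For every integer k ≥ 0 there exists a constant C > 0 (depending only on k and M) such that for all (k+1)-times continuously differentiable functions f, g : closure(Ω) → ℝ with sup_Ω |∇f| < ∞, sup_Ω |g| < ∞, ‖∇f‖_{H^k(Ω)} < ∞, and ‖g‖_{H^k(Ω)} < ∞, the commutator [∇^{k+1}, f]g := ∇^{k+1}(fg) − f·∇^{k+1}g satisfies ‖[∇^{k+1}, f]g‖_{L²(Ω)} ≤ C ( sup_Ω|∇f| · ‖g‖_{H^k(Ω)} + ‖∇f‖_{H^k(Ω)} · sup_Ω|g| ). -/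

import Mathlib

/- STATEMENT 7: Moser-type commutator estimate
‖[∇^{k+1}, f]g‖_{L²(Ω)} ≤ C (sup|∇f|‖g‖_{H^k} + ‖∇f‖_{H^k} sup|g|)
on the perturbed half-space Ω = {x ∈ ℝ³ : x₁ > M(x₂,x₃)}. -/

noncomputable section

open MeasureTheory Real Set Filter

abbrev E3 : Type := EuclideanSpace ℝ (Fin 3)
abbrev E2 : Type := EuclideanSpace ℝ (Fin 2)

/-- Projection on the tangential variables `x' = (x₂, x₃)`. -/
def proj2 (x : E3) : E2 := (WithLp.equiv 2 (Fin 2 → ℝ)).symm ![x 1, x 2]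

/-- The perturbed half-space `Ω = {x : x₁ > M(x₂,x₃)}`. -/
def Omg (M : E2 → ℝ) : Set E3 := {x : E3 | M (proj2 x) < x 0}

/-- The `H^m(O)` Sobolev norm, `(∑_{j=0}^m ∫_O |∇^j f|² dx)^{1/2}`,
for functions with values in a normed space `F`. -/
def sobNorm {F : Type*} [NormedAddCommGroup F] [NormedSpace ℝ F]
    (m : ℕ) (O : Set E3) (f : E3 → F) : ℝ :=
  Real.sqrt (∑ j ∈ Finset.range (m + 1), ∫ x in O, ‖iteratedFDeriv ℝ j f x‖ ^ 2)

open scoped ENNReal Topology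

/-- The Garsia recursion. -/
def garsia {X : Type*} (τ : X → X) (W : X → ℝ≥0∞) (φ : X → ℝ≥0∞) : ℕ → X → ℝ≥0∞
  | 0 => fun _ => 0
  | n + 1 => fun x => (W x + garsia τ W φ n (τ x)) - φ x

lemma garsia_mono {X : Type*} (τ : X → X) (W φ : X → ℝ≥0∞) (n : ℕ) (x : X) :
    garsia τ W φ n x ≤ garsia τ W φ (n + 1) x := by
  induction n generalizing x with
  | zero => simp [garsia]
  | succ n ih =>
    rw [garsia, garsia]
    exact tsub_le_tsub_right (add_le_add_right (ih _) _) _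

lemma garsia_mono' {X : Type*} (τ : X → X) (W φ : X → ℝ≥0∞) (x : X) :
    Monotone (fun n => garsia τ W φ n x) :=
  monotone_nat_of_le_succ fun n => garsia_mono τ W φ n x

lemma garsia_meas {X : Type*} [MeasurableSpace X] {τ : X → X} (hτ : Measurable τ)
    {W φ : X → ℝ≥0∞} (hW : Measurable W) (hφ : Measurable φ) (n : ℕ) :
    Measurable (garsia τ W φ n) := by
  induction n with
  | zero => exact measurable_const
  | succ n ih => exact (hW.add (ih.comp hτ)).sub hφ

lemma garsia_fin {X : Type*} [MeasurableSpace X] {μ : Measure X} {τ : X → X}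
    (hτ : MeasurePreserving τ μ μ)
    {W φ : X → ℝ≥0∞} (hW : Measurable W) (hφ : Measurable φ) (hfin : ∫⁻ x, W x ∂μ ≠ ∞) (n : ℕ) :
    ∫⁻ x, garsia τ W φ n x ∂μ ≠ ∞ := by
  induction n with
  | zero => simp [garsia]
  | succ n ih =>
    refine ne_top_of_le_ne_top ?_ (lintegral_mono (g := fun x => W x + garsia τ W φ n (τ x)) ?_)
    · rw [lintegral_add_left hW, hτ.lintegral_comp (garsia_meas hτ.measurable hW hφ n)]
      exact ENNReal.add_ne_top.2 ⟨hfin, ih⟩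
    · intro x; exact tsub_le_self

lemma birkhoff_le_garsia {X : Type*} (τ : X → X) (W : X → ℝ≥0∞) (φ : X → ℝ≥0∞) (c : ℝ≥0∞)
    (hφ : ∀ x, φ x ≤ c) (n : ℕ) (x : X) :
    birkhoffSum τ W n x ≤ garsia τ W φ n x + n * c := by
  induction n generalizing x with
  | zero => simp
  | succ n ih =>
    rw [birkhoffSum_succ', garsia]
    calc W x + birkhoffSum τ W n (τ x) ≤ W x + (garsia τ W φ n (τ x) + n * c) := by
          gcongr; exact ih _
      _ = (W x + garsia τ W φ n (τ x)) + n * c := by ring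
      _ ≤ ((W x + garsia τ W φ n (τ x)) - φ x + φ x) + n * c := by
          refine add_le_add_left ?_ _; exact le_tsub_add
      _ ≤ ((W x + garsia τ W φ n (τ x)) - φ x + c) + n * c := by
          gcongr; exact hφ x
      _ = _ := by push_cast; ring

lemma birkhoff_meas {X : Type*} [MeasurableSpace X] {τ : X → X} (hτ : Measurable τ)
    {W : X → ℝ≥0∞} (hW : Measurable W) (n : ℕ) : Measurable (birkhoffSum τ W n) := by
  unfold birkhoffSum
  exact Finset.measurable_fun_sum _ fun i _ => hW.comp (hτ.iterate i)

lemma maximal_weak {X : Type*} [MeasurableSpace X] {μ : Measure X} {τ : X → X}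
    (hτ : MeasurePreserving τ μ μ) {W : X → ℝ≥0∞} (hW : Measurable W) (c : ℝ≥0∞)
    (N : ℕ) :
    c * μ {x | ∃ n ≤ N, n * c < birkhoffSum τ W n x} ≤ ∫⁻ x, W x ∂μ := by
  by_cases hfin : ∫⁻ x, W x ∂μ = ∞
  · simp [hfin]
  set E : Set X := {x | ∃ n ≤ N, n * c < birkhoffSum τ W n x} with hE
  have hEm : MeasurableSet E := by
    have : E = ⋃ n ∈ Finset.range (N + 1), {x | n * c < birkhoffSum τ W n x} := by
      ext x; simp [hE]
    rw [this]
    exact Finset.measurableSet_biUnion _ fun n _ =>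
      measurableSet_lt measurable_const (birkhoff_meas hτ.measurable hW n)
  set φ : X → ℝ≥0∞ := E.indicator (fun _ => c) with hφd
  have hφ : Measurable φ := measurable_const.indicator hEm
  have hφc : ∀ x, φ x ≤ c := fun x => by
    by_cases h : x ∈ E <;> simp [hφd, h]
  have key : ∀ x, garsia τ W φ (N + 1) x + φ x ≤ W x + garsia τ W φ (N + 1) (τ x) := by
    intro x
    have h1 : garsia τ W φ (N + 1) x + φ x = W x + garsia τ W φ N (τ x) := by
      by_cases hx : x ∈ E
      · obtain ⟨n, hn, hlt⟩ := hx
        have h2 := birkhoff_le_garsia τ W φ c hφc n x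
        have hpos : 0 < garsia τ W φ n x := by
          rw [pos_iff_ne_zero]
          intro h0
          rw [h0, zero_add] at h2
          exact absurd hlt (not_lt.2 h2)
        have h3 : 0 < garsia τ W φ (N + 1) x :=
          hpos.trans_le (garsia_mono' τ W φ x (by omega))
        rw [garsia] at h3 ⊢
        exact tsub_add_cancel_of_le (tsub_pos_iff_lt.1 h3).le
      · simp [garsia, hφd, hx]
    rw [h1]
    gcongr
    exact garsia_mono _ _ _ _ _
  have hgm := garsia_meas hτ.measurable hW hφ (N + 1)
  have h2 := lintegral_mono (μ := μ) key
  rw [lintegral_add_left hgm, lintegral_add_left hW, hτ.lintegral_comp hgm, add_comm (∫⁻ x, W x ∂μ)] at h2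
  have h3 := (ENNReal.add_le_add_iff_left (garsia_fin hτ hW hφ hfin (N + 1))).1 h2
  rwa [hφd, lintegral_indicator_const hEm] at h3

lemma sq_le_layer (y : ℝ≥0∞) :
    y ^ 2 ≤ 4 * ∫⁻ l in Ioi (0 : ℝ), {l : ℝ | ENNReal.ofReal l < y}.indicator
      (fun l => ENNReal.ofReal l) l := by
  by_cases hy : y = ∞
  · subst hy
    have h1 : (∞ : ℝ≥0∞) ≤ ∫⁻ l in Ioi (0 : ℝ), {l : ℝ | ENNReal.ofReal l < ∞}.indicator
      (fun l => ENNReal.ofReal l) l := by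
      calc (∞ : ℝ≥0∞) = ∫⁻ l in Ioi (1 : ℝ), 1 := by simp
        _ ≤ ∫⁻ l in Ioi (1 : ℝ), ENNReal.ofReal l := by
            refine setLIntegral_mono (by fun_prop) fun l hl => ?_
            rw [← ENNReal.ofReal_one]
            exact ENNReal.ofReal_le_ofReal (le_of_lt hl)
        _ ≤ ∫⁻ l in Ioi (0 : ℝ), ENNReal.ofReal l :=
            lintegral_mono_set (Ioi_subset_Ioi zero_le_one)
        _ = _ := by simp
    rw [top_le_iff] at h1
    rw [h1]; simp
  · lift y to NNReal using hy
    calc (y : ℝ≥0∞) ^ 2 = 4 * ∫⁻ l in Ico ((y : ℝ) / 2) y, ENNReal.ofReal (y / 2) := by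
          rw [setLIntegral_const, Real.volume_Ico, ← ENNReal.ofReal_mul (by positivity)]
          rw [show (4 : ℝ≥0∞) = ENNReal.ofReal 4 by simp, ← ENNReal.ofReal_mul (by positivity)]
          rw [← ENNReal.ofReal_coe_nnreal, ← ENNReal.ofReal_pow (by positivity)]
          congr 1; ring
      _ ≤ 4 * ∫⁻ l in Ioi (0 : ℝ), {l : ℝ | ENNReal.ofReal l < y}.indicator
            (fun l => ENNReal.ofReal l) l := by
          refine mul_le_mul_right ?_ _
          have hm : MeasurableSet {l : ℝ | ENNReal.ofReal l < y} :=
            measurableSet_lt (by fun_prop) measurable_const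
          rw [← lintegral_indicator measurableSet_Ico, ← lintegral_indicator measurableSet_Ioi]
          refine lintegral_mono fun l => ?_
          by_cases hl : l ∈ Ico ((y : ℝ) / 2) y
          · rcases eq_or_lt_of_le (zero_le : 0 ≤ y) with h0 | h0
            · simp [← h0] at hl
            have h0' : (0 : ℝ) < y := by exact_mod_cast h0
            have hl0 : l ∈ Ioi (0 : ℝ) := by
              simp only [mem_Ioi]; linarith [hl.1]
            have hly : l ∈ {l : ℝ | ENNReal.ofReal l < y} := by
              simp only [mem_ofPred_eq]
              rw [← ENNReal.ofReal_coe_nnreal]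
              exact (ENNReal.ofReal_lt_ofReal_iff h0').2 hl.2
            rw [indicator_of_mem hl, indicator_of_mem hl0, indicator_of_mem hly]
            exact ENNReal.ofReal_le_ofReal hl.1
          · rw [indicator_of_notMem hl]; exact zero_le

lemma layer_one (y : ℝ≥0∞) :
    ∫⁻ l in Ioi (0 : ℝ), {l : ℝ | ENNReal.ofReal (l / 2) < y}.indicator (fun _ => (1 : ℝ≥0∞)) l
      ≤ 2 * y := by
  by_cases hy : y = ∞
  · subst hy; simp
  lift y to NNReal using hy
  have hm : MeasurableSet {l : ℝ | ENNReal.ofReal (l / 2) < y} :=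
    measurableSet_lt (by fun_prop) measurable_const
  rw [lintegral_indicator hm, Measure.restrict_restrict hm, setLIntegral_one]
  calc volume ({l : ℝ | ENNReal.ofReal (l / 2) < y} ∩ Ioi 0) ≤ volume (Ioo (0 : ℝ) (2 * y)) := by
        refine measure_mono fun l hl => ?_
        have h1 : ENNReal.ofReal (l / 2) < y := hl.1
        have h2 : 0 < l := hl.2
        rw [← ENNReal.ofReal_coe_nnreal, ENNReal.ofReal_lt_ofReal_iff'] at h1
        exact ⟨h2, by linarith [h1.1]⟩
    _ = 2 * y := by
        rw [Real.volume_Ioo, sub_zero, ENNReal.ofReal_mul (by norm_num)]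
        simp

/-- Discrete maximal function up to time `N`. -/
def dmax {X : Type*} (τ : X → X) (W : X → ℝ≥0∞) (N : ℕ) (x : X) : ℝ≥0∞ :=
  (Finset.range N).sup fun n => birkhoffSum τ W (n + 1) x / ((n + 1 : ℕ) : ℝ≥0∞)

lemma dmax_meas {X : Type*} [MeasurableSpace X] {τ : X → X} (hτ : Measurable τ)
    {W : X → ℝ≥0∞} (hW : Measurable W) (N : ℕ) : Measurable (dmax τ W N) := by
  unfold dmax
  have h : ∀ s : Finset ℕ, Measurable fun x =>
      s.sup fun n => birkhoffSum τ W (n + 1) x / ((n + 1 : ℕ) : ℝ≥0∞) := by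
    intro s
    induction s using Finset.induction_on with
    | empty => simp
    | insert a s ha ih =>
      simp only [Finset.sup_insert]
      exact ((birkhoff_meas hτ hW (a + 1)).div_const _).sup ih
  exact h _

lemma dmax_weak {X : Type*} [MeasurableSpace X] {μ : Measure X} {τ : X → X}
    (hτ : MeasurePreserving τ μ μ) {W : X → ℝ≥0∞} (hW : Measurable W) (N : ℕ) (l : ℝ) (hl : 0 < l) :
    ENNReal.ofReal l * μ {x | ENNReal.ofReal l < dmax τ W N x} ≤
      2 * ∫⁻ x, {x | ENNReal.ofReal (l / 2) < W x}.indicator W x ∂μ := by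
  set W1 : X → ℝ≥0∞ := {x | ENNReal.ofReal (l / 2) < W x}.indicator W with hW1
  have hm : MeasurableSet {x | ENNReal.ofReal (l / 2) < W x} :=
    measurableSet_lt measurable_const hW
  have hW1m : Measurable W1 := hW.indicator hm
  have hle : ∀ x, W x ≤ ENNReal.ofReal (l / 2) + W1 x := by
    intro x
    by_cases hx : x ∈ {x | ENNReal.ofReal (l / 2) < W x}
    · rw [hW1, indicator_of_mem hx]; exact le_add_self
    · simp only [mem_ofPred_eq, not_lt] at hx
      exact hx.trans le_self_add
  have hsub : {x | ENNReal.ofReal l < dmax τ W N x} ⊆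
      {x | ∃ n ≤ N, n * ENNReal.ofReal (l / 2) < birkhoffSum τ W1 n x} := by
    intro x hx
    simp only [mem_ofPred_eq, dmax, Finset.lt_sup_iff, Finset.mem_range] at hx
    obtain ⟨n, hn, hlt⟩ := hx
    refine ⟨n + 1, hn, ?_⟩
    rw [ENNReal.lt_div_iff_mul_lt (by simp) (by simp)] at hlt
    have h1 : birkhoffSum τ W (n + 1) x ≤
        (n + 1 : ℕ) * ENNReal.ofReal (l / 2) + birkhoffSum τ W1 (n + 1) x := by
      unfold birkhoffSum
      calc ∑ k ∈ Finset.range (n + 1), W (τ^[k] x)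
          ≤ ∑ k ∈ Finset.range (n + 1), (ENNReal.ofReal (l / 2) + W1 (τ^[k] x)) :=
            Finset.sum_le_sum fun k _ => hle _
        _ = _ := by rw [Finset.sum_add_distrib]; simp
    have h2 : ENNReal.ofReal l = ENNReal.ofReal (l / 2) + ENNReal.ofReal (l / 2) := by
      rw [← ENNReal.ofReal_add (by positivity) (by positivity)]; congr 1; ring
    have h3 := hlt.trans_le h1
    rw [h2, add_mul, mul_comm (ENNReal.ofReal (l / 2))] at h3
    exact lt_of_add_lt_add_left h3
  calc ENNReal.ofReal l * μ {x | ENNReal.ofReal l < dmax τ W N x}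
      ≤ ENNReal.ofReal l * μ {x | ∃ n ≤ N, n * ENNReal.ofReal (l / 2) < birkhoffSum τ W1 n x} := by
        gcongr
    _ = 2 * (ENNReal.ofReal (l / 2) *
          μ {x | ∃ n ≤ N, n * ENNReal.ofReal (l / 2) < birkhoffSum τ W1 n x}) := by
        rw [← mul_assoc]
        congr 1
        rw [show (2 : ℝ≥0∞) = ENNReal.ofReal 2 by simp, ← ENNReal.ofReal_mul (by norm_num)]
        congr 1; ring
    _ ≤ _ := by
        gcongr
        exact maximal_weak hτ hW1m _ N

lemma dmax_strong {X : Type*} [MeasurableSpace X] {μ : Measure X} [SFinite μ] {τ : X → X}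
    (hτ : MeasurePreserving τ μ μ) {W : X → ℝ≥0∞} (hW : Measurable W) (N : ℕ) :
    ∫⁻ x, dmax τ W N x ^ 2 ∂μ ≤ 16 * ∫⁻ x, W x ^ 2 ∂μ := by
  have hD := dmax_meas hτ.measurable hW N
  have hm1 : Measurable (fun p : X × ℝ => {l : ℝ | ENNReal.ofReal l < dmax τ W N p.1}.indicator
      (fun l => ENNReal.ofReal l) p.2) := by
    have : (fun p : X × ℝ => {l : ℝ | ENNReal.ofReal l < dmax τ W N p.1}.indicator
      (fun l => ENNReal.ofReal l) p.2) = {p : X × ℝ | ENNReal.ofReal p.2 < dmax τ W N p.1}.indicator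
        (fun p => ENNReal.ofReal p.2) := by
      ext p; simp [indicator]
    rw [this]
    exact Measurable.indicator (by fun_prop)
      (measurableSet_lt (by fun_prop) (hD.comp measurable_fst))
  have hm2 : Measurable (fun p : ℝ × X =>
      W p.2 * {l : ℝ | ENNReal.ofReal (l / 2) < W p.2}.indicator (fun _ => (1 : ℝ≥0∞)) p.1) := by
    have : (fun p : ℝ × X => {l : ℝ | ENNReal.ofReal (l / 2) < W p.2}.indicator
      (fun _ => (1 : ℝ≥0∞)) p.1) = {p : ℝ × X | ENNReal.ofReal (p.1 / 2) < W p.2}.indicator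
        (fun p => 1) := by
      ext p; simp [indicator]
    refine (hW.comp measurable_snd).mul ?_
    rw [this]
    exact Measurable.indicator (by fun_prop)
      (measurableSet_lt (by fun_prop) (hW.comp measurable_snd))
  calc ∫⁻ x, dmax τ W N x ^ 2 ∂μ
      ≤ ∫⁻ x, (4 * ∫⁻ l in Ioi (0 : ℝ), {l : ℝ | ENNReal.ofReal l < dmax τ W N x}.indicator
          (fun l => ENNReal.ofReal l) l) ∂μ := lintegral_mono fun x => sq_le_layer _
    _ = 4 * ∫⁻ x, (∫⁻ l in Ioi (0 : ℝ), {l : ℝ | ENNReal.ofReal l < dmax τ W N x}.indicator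
          (fun l => ENNReal.ofReal l) l) ∂μ := by
        rw [lintegral_const_mul]
        exact hm1.lintegral_prod_right'
    _ = 4 * ∫⁻ l in Ioi (0 : ℝ), ∫⁻ x, {l : ℝ | ENNReal.ofReal l < dmax τ W N x}.indicator
          (fun l => ENNReal.ofReal l) l ∂μ := by
        rw [lintegral_lintegral_swap]
        exact hm1.aemeasurable
    _ ≤ 4 * ∫⁻ l in Ioi (0 : ℝ), 2 * ∫⁻ x,
          W x * {l : ℝ | ENNReal.ofReal (l / 2) < W x}.indicator (fun _ => (1 : ℝ≥0∞)) l ∂μ := by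
        gcongr 4 * ?_
        refine setLIntegral_mono' measurableSet_Ioi fun l hl => ?_
        have e1 : (fun x => {l : ℝ | ENNReal.ofReal l < dmax τ W N x}.indicator
          (fun l => ENNReal.ofReal l) l) = {x | ENNReal.ofReal l < dmax τ W N x}.indicator
            (fun _ => ENNReal.ofReal l) := by ext x; simp [indicator]
        have e2 : (fun x => W x * {l : ℝ | ENNReal.ofReal (l / 2) < W x}.indicator
          (fun _ => (1 : ℝ≥0∞)) l) = {x | ENNReal.ofReal (l / 2) < W x}.indicator W := by
          ext x; simp [indicator]
        rw [e1, e2, lintegral_indicator_const (measurableSet_lt measurable_const hD)]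
        exact dmax_weak hτ hW N l hl
    _ = 8 * ∫⁻ x, (∫⁻ l in Ioi (0 : ℝ),
          W x * {l : ℝ | ENNReal.ofReal (l / 2) < W x}.indicator (fun _ => (1 : ℝ≥0∞)) l) ∂μ := by
        rw [lintegral_const_mul _ hm2.lintegral_prod_right', lintegral_lintegral_swap hm2.aemeasurable,
          ← mul_assoc]
        norm_num
    _ ≤ 8 * ∫⁻ x, 2 * W x ^ 2 ∂μ := by
        refine mul_le_mul_right (lintegral_mono fun x => ?_) _
        have hmx : Measurable ({l : ℝ | ENNReal.ofReal (l / 2) < W x}.indicator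
            (fun _ => (1 : ℝ≥0∞))) :=
          measurable_const.indicator (measurableSet_lt (by fun_prop) measurable_const)
        rw [lintegral_const_mul _ hmx]
        calc W x * _ ≤ W x * (2 * W x) := mul_le_mul_right (layer_one _) _
          _ = _ := by ring
    _ = _ := by
        rw [lintegral_const_mul _ (hW.pow_const 2), ← mul_assoc]; norm_num
open scoped ENNReal Topology

/-- One-sided average in direction `v` at scale `h`. -/
def avgop (v : EuclideanSpace ℝ (Fin 3)) (w : EuclideanSpace ℝ (Fin 3) → ℝ≥0∞) (h : ℝ)
    (x : EuclideanSpace ℝ (Fin 3)) : ℝ≥0∞ :=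
  (∫⁻ t in Ioc (0 : ℝ) h, w (x + t • v)) / ENNReal.ofReal h

lemma avgop_meas (v : EuclideanSpace ℝ (Fin 3)) {w : EuclideanSpace ℝ (Fin 3) → ℝ≥0∞}
    (hw : Measurable w) (h : ℝ) : Measurable (avgop v w h) := by
  unfold avgop
  refine Measurable.div_const ?_ _
  have : Measurable (fun p : EuclideanSpace ℝ (Fin 3) × ℝ => w (p.1 + p.2 • v)) :=
    hw.comp (by fun_prop)
  exact this.lintegral_prod_right'

lemma cs_Ioc {g : ℝ → ℝ≥0∞} (hg : Measurable g) {h : ℝ} (hh : 0 < h) :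
    ((∫⁻ t in Ioc (0 : ℝ) h, g t) / ENNReal.ofReal h) ^ 2 ≤
      (∫⁻ t in Ioc (0 : ℝ) h, g t ^ 2) / ENNReal.ofReal h := by
  have h1 := ENNReal.lintegral_mul_le_Lp_mul_Lq (volume.restrict (Ioc (0 : ℝ) h))
    (Real.HolderConjugate.two_two) (f := g) (g := fun _ => 1) hg.aemeasurable aemeasurable_const
  have hne : ENNReal.ofReal h ≠ 0 := by simpa using hh
  have hv : volume (Ioc (0 : ℝ) h) = ENNReal.ofReal h := by simp
  simp only [Pi.mul_apply, mul_one, ENNReal.rpow_two, one_pow, lintegral_const,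
    Measure.restrict_apply_univ, one_mul, hv] at h1
  have h2 : (∫⁻ t in Ioc (0 : ℝ) h, g t) ^ 2 ≤ (∫⁻ t in Ioc (0 : ℝ) h, g t ^ 2) * ENNReal.ofReal h := by
    calc (∫⁻ t in Ioc (0 : ℝ) h, g t) ^ 2 ≤ _ := pow_le_pow_left₀ zero_le h1 2
      _ = _ := by
        rw [mul_pow, ← ENNReal.rpow_natCast, ← ENNReal.rpow_natCast, ← ENNReal.rpow_mul,
          ← ENNReal.rpow_mul]
        norm_num
  rw [ENNReal.div_eq_inv_mul, mul_pow]
  calc (ENNReal.ofReal h)⁻¹ ^ 2 * (∫⁻ t in Ioc (0 : ℝ) h, g t) ^ 2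
      ≤ (ENNReal.ofReal h)⁻¹ ^ 2 * ((∫⁻ t in Ioc (0 : ℝ) h, g t ^ 2) * ENNReal.ofReal h) := by
        gcongr
    _ = (ENNReal.ofReal h)⁻¹ * (∫⁻ t in Ioc (0 : ℝ) h, g t ^ 2) *
          ((ENNReal.ofReal h)⁻¹ * ENNReal.ofReal h) := by ring
    _ = _ := by
        rw [ENNReal.inv_mul_cancel hne ENNReal.ofReal_ne_top, mul_one, ENNReal.div_eq_inv_mul]

lemma avgop_L2 (v : EuclideanSpace ℝ (Fin 3)) {w : EuclideanSpace ℝ (Fin 3) → ℝ≥0∞}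
    (hw : Measurable w) {h : ℝ} (hh : 0 < h) :
    ∫⁻ x, avgop v w h x ^ 2 ≤ ∫⁻ x, w x ^ 2 := by
  have hne : ENNReal.ofReal h ≠ 0 := by simpa using hh
  have hm : Measurable (fun p : EuclideanSpace ℝ (Fin 3) × ℝ => w (p.1 + p.2 • v) ^ 2) :=
    (hw.comp (by fun_prop)).pow_const 2
  calc ∫⁻ x, avgop v w h x ^ 2
      ≤ ∫⁻ x, (∫⁻ t in Ioc (0 : ℝ) h, w (x + t • v) ^ 2) / ENNReal.ofReal h :=
        lintegral_mono fun x => cs_Ioc (hw.comp (by fun_prop)) hh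
    _ = (∫⁻ x, ∫⁻ t in Ioc (0 : ℝ) h, w (x + t • v) ^ 2) / ENNReal.ofReal h := by
        simp only [div_eq_mul_inv]
        rw [lintegral_mul_const]
        exact hm.lintegral_prod_right'
    _ = (∫⁻ t in Ioc (0 : ℝ) h, ∫⁻ x, w (x + t • v) ^ 2) / ENNReal.ofReal h := by
        rw [lintegral_lintegral_swap]
        exact hm.aemeasurable
    _ = (∫⁻ t in Ioc (0 : ℝ) h, ∫⁻ x, w x ^ 2) / ENNReal.ofReal h := by
        congr 2
        ext t
        exact lintegral_add_right_eq_self (fun x => w x ^ 2) (t • v)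
    _ = _ := by
        rw [setLIntegral_const]
        simp only [Real.volume_Ioc, sub_zero]
        exact ENNReal.mul_div_cancel_right hne ENNReal.ofReal_ne_top

lemma birkhoff_avg (v : EuclideanSpace ℝ (Fin 3)) {w : EuclideanSpace ℝ (Fin 3) → ℝ≥0∞}
    {δ : ℝ} (hδ : 0 < δ) (n : ℕ) (x : EuclideanSpace ℝ (Fin 3)) :
    birkhoffSum (fun y => y + δ • v) (avgop v w δ) n x =
      (∫⁻ t in Ioc (0 : ℝ) (n * δ), w (x + t • v)) / ENNReal.ofReal δ := by
  induction n with
  | zero => simp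
  | succ n ih =>
    rw [birkhoffSum_succ, ih]
    have hit : ∀ n : ℕ, (fun y => y + δ • v)^[n] x = x + (n * δ) • v := by
      intro n
      induction n with
      | zero => simp
      | succ n ih => rw [Function.iterate_succ_apply', ih]; push_cast; module
    have hsplit : Ioc (0 : ℝ) ((n + 1 : ℕ) * δ) = Ioc 0 (n * δ) ∪ Ioc (n * δ) ((n + 1 : ℕ) * δ) := by
      rw [Ioc_union_Ioc_eq_Ioc (by positivity)]
      push_cast; nlinarith
    have hdis : Disjoint (Ioc (0 : ℝ) (n * δ)) (Ioc (n * δ) ((n + 1 : ℕ) * δ)) :=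
      Ioc_disjoint_Ioc_of_le le_rfl
    rw [hit, hsplit, lintegral_union measurableSet_Ioc hdis, ENNReal.add_div]
    congr 1
    unfold avgop
    congr 1
    rw [← lintegral_indicator measurableSet_Ioc, ← lintegral_indicator measurableSet_Ioc]
    rw [← lintegral_add_right_eq_self _ (n * δ)]
    nth_rewrite 2 [← lintegral_add_right_eq_self _ (n * δ)]
    rw [lintegral_add_right_eq_self (fun t => (Ioc (0 : ℝ) δ).indicator
      (fun t => w (x + (↑n * δ) • v + t • v)) t) (n * δ)]
    refine lintegral_congr fun t => ?_
    simp only [indicator, mem_Ioc]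
    have : (0 < t ∧ t ≤ δ) ↔ (n * δ < t + n * δ ∧ t + n * δ ≤ (n + 1 : ℕ) * δ) := by
      push_cast
      constructor <;> rintro ⟨h1, h2⟩ <;> constructor <;> nlinarith
    simp only [this]
    congr 2
    module

/-- Maximal function with mesh `2^{-m}`. -/
def maxm (v : EuclideanSpace ℝ (Fin 3)) (w : EuclideanSpace ℝ (Fin 3) → ℝ≥0∞) (m : ℕ)
    (x : EuclideanSpace ℝ (Fin 3)) : ℝ≥0∞ :=
  ⨆ n : ℕ, avgop v w ((n + 1 : ℕ) * (1 / 2 ^ m : ℝ)) x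

/-- One-sided directional maximal function. -/
def maxop (v : EuclideanSpace ℝ (Fin 3)) (w : EuclideanSpace ℝ (Fin 3) → ℝ≥0∞)
    (x : EuclideanSpace ℝ (Fin 3)) : ℝ≥0∞ :=
  ⨆ m : ℕ, maxm v w m x

lemma maxm_meas (v : EuclideanSpace ℝ (Fin 3)) {w : EuclideanSpace ℝ (Fin 3) → ℝ≥0∞}
    (hw : Measurable w) (m : ℕ) : Measurable (maxm v w m) :=
  Measurable.iSup fun _ => avgop_meas v hw _

lemma maxop_meas (v : EuclideanSpace ℝ (Fin 3)) {w : EuclideanSpace ℝ (Fin 3) → ℝ≥0∞}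
    (hw : Measurable w) : Measurable (maxop v w) :=
  Measurable.iSup fun _ => maxm_meas v hw _

lemma iSup_sq {g : ℕ → ℝ≥0∞} (hg : Monotone g) : (⨆ n, g n) ^ 2 = ⨆ n, g n ^ 2 := by
  have h1 := tendsto_atTop_iSup hg
  have h2 : Tendsto (fun n => g n ^ 2) atTop (𝓝 ((⨆ n, g n) ^ 2)) :=
    ((ENNReal.continuous_pow 2).tendsto _).comp h1
  have h3 := tendsto_atTop_iSup (f := fun n => g n ^ 2)
    (fun a b hab => pow_le_pow_left₀ zero_le (hg hab) 2)
  exact tendsto_nhds_unique h2 h3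

lemma lintegral_iSup_sq_le {g : ℕ → EuclideanSpace ℝ (Fin 3) → ℝ≥0∞} (hm : ∀ n, Measurable (g n))
    (hg : Monotone g) (K : ℝ≥0∞) (hK : ∀ n, ∫⁻ x, g n x ^ 2 ≤ K) :
    ∫⁻ x, (⨆ n, g n x) ^ 2 ≤ K := by
  have : ∀ x, (⨆ n, g n x) ^ 2 = ⨆ n, g n x ^ 2 := fun x => iSup_sq fun a b hab => hg hab x
  simp only [this]
  rw [lintegral_iSup (fun n => (hm n).pow_const 2)]
  · exact iSup_le hK
  · intro a b hab x
    exact pow_le_pow_left₀ zero_le (hg hab x) 2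

lemma maxm_L2 (v : EuclideanSpace ℝ (Fin 3)) {w : EuclideanSpace ℝ (Fin 3) → ℝ≥0∞}
    (hw : Measurable w) (m : ℕ) :
    ∫⁻ x, maxm v w m x ^ 2 ≤ 16 * ∫⁻ x, w x ^ 2 := by
  set δ : ℝ := 1 / 2 ^ m with hδd
  have hδ : 0 < δ := by positivity
  set τ : EuclideanSpace ℝ (Fin 3) → EuclideanSpace ℝ (Fin 3) := fun y => y + δ • v with hτd
  have hτ : MeasurePreserving τ volume volume := measurePreserving_add_right volume (δ • v)
  have e : ∀ x, maxm v w m x = ⨆ N, dmax τ (avgop v w δ) N x := by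
    intro x
    have h1 : ∀ n : ℕ, avgop v w ((n + 1 : ℕ) * δ) x =
        birkhoffSum τ (avgop v w δ) (n + 1) x / ((n + 1 : ℕ) : ℝ≥0∞) := by
      intro n
      rw [birkhoff_avg v hδ, avgop, ENNReal.ofReal_mul (by positivity), ENNReal.ofReal_natCast]
      rw [div_eq_mul_inv, div_eq_mul_inv, div_eq_mul_inv, ENNReal.mul_inv (by simp) (by simp)]
      ring
    unfold maxm dmax
    simp only [← hδd]
    simp_rw [h1, Finset.sup_eq_iSup]
    apply le_antisymm
    · refine iSup_le fun n => ?_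
      refine le_trans ?_ (le_iSup _ (n + 1))
      exact le_iSup₂_of_le n (by simp) le_rfl
    · refine iSup_le fun N => iSup₂_le fun n _ => le_iSup_of_le n le_rfl
  simp only [e]
  refine lintegral_iSup_sq_le (fun n => dmax_meas hτ.measurable (avgop_meas v hw δ) n) ?_ _ ?_
  · intro a b hab x
    exact Finset.sup_mono (Finset.range_mono hab)
  · intro N
    exact (dmax_strong hτ (avgop_meas v hw δ) N).trans (mul_le_mul_right (avgop_L2 v hw hδ) _)

lemma maxop_L2 (v : EuclideanSpace ℝ (Fin 3)) {w : EuclideanSpace ℝ (Fin 3) → ℝ≥0∞}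
    (hw : Measurable w) :
    ∫⁻ x, maxop v w x ^ 2 ≤ 16 * ∫⁻ x, w x ^ 2 := by
  refine lintegral_iSup_sq_le (fun m => maxm_meas v hw m) ?_ _ (fun m => maxm_L2 v hw m)
  refine monotone_nat_of_le_succ fun m x => ?_
  refine iSup_le fun n => le_iSup_of_le (2 * n + 1) (le_of_eq ?_)
  congr 1
  push_cast
  field_simp
  ring

lemma avg_le_maxop (v : EuclideanSpace ℝ (Fin 3)) (w : EuclideanSpace ℝ (Fin 3) → ℝ≥0∞)
    {h : ℝ} (hh : 0 < h) (x : EuclideanSpace ℝ (Fin 3)) :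
    ∫⁻ t in Ioc (0 : ℝ) h, w (x + t • v) ≤ ENNReal.ofReal (2 * h) * maxop v w x := by
  obtain ⟨m, hm⟩ := exists_pow_lt_of_lt_one hh (show (1 / 2 : ℝ) < 1 by norm_num)
  have hp : (0 : ℝ) < (1 / 2) ^ m := by positivity
  set n := ⌊h / (1 / 2 : ℝ) ^ m⌋₊ with hn
  have h1 : (n : ℝ) ≤ h / (1 / 2) ^ m := Nat.floor_le (by positivity)
  have h2 : h / (1 / 2 : ℝ) ^ m < n + 1 := Nat.lt_floor_add_one _
  rw [le_div_iff₀ hp] at h1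
  rw [div_lt_iff₀ hp] at h2
  set h' : ℝ := (n + 1 : ℕ) * (1 / 2 ^ m : ℝ) with hh'
  have e : h' = (n + 1) * (1 / 2) ^ m := by rw [hh', one_div_pow]; push_cast; rfl
  have h3 : h ≤ h' := by rw [e]; exact h2.le
  have h4 : h' ≤ 2 * h := by rw [e]; nlinarith
  have hpos : 0 < h' := hh.trans_le h3
  calc ∫⁻ t in Ioc (0 : ℝ) h, w (x + t • v) ≤ ∫⁻ t in Ioc (0 : ℝ) h', w (x + t • v) :=
        lintegral_mono_set (Ioc_subset_Ioc_right h3)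
    _ = ENNReal.ofReal h' * avgop v w h' x := by
        rw [avgop, ENNReal.mul_div_cancel (by simpa using hpos) ENNReal.ofReal_ne_top]
    _ ≤ ENNReal.ofReal (2 * h) * maxop v w x := by
        gcongr
        exact le_iSup_of_le m (le_iSup_of_le n le_rfl)

lemma taylor_bound {G : Type} [NormedAddCommGroup G] [NormedSpace ℝ G] [CompleteSpace G]
    (n : ℕ) (u : ℕ → ℝ → G) (h : ℝ)
    (hd : ∀ i ≤ n, ∀ t ∈ Icc 0 h, HasDerivAt (u i) (u (i + 1) t) t)
    (hc : ContinuousOn (u (n + 1)) (Icc 0 h)) :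
    ∀ t ∈ Icc 0 h, ‖u 0 t - ∑ i ∈ Finset.range (n + 1), (t ^ i / (i.factorial : ℝ)) • u i 0‖ ≤
      t ^ n * ∫ s in (0 : ℝ)..h, ‖u (n + 1) s‖ := by
  induction n generalizing u with
  | zero =>
    intro t ht
    have hsub : uIcc 0 t ⊆ Icc 0 h := by
      rw [uIcc_of_le ht.1]; exact Icc_subset_Icc_right ht.2
    have h0h : 0 ≤ h := ht.1.trans ht.2
    have hintegr : IntervalIntegrable (u 1) volume 0 t := (hc.mono hsub).intervalIntegrable
    have h1 := intervalIntegral.integral_eq_sub_of_hasDerivAt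
      (fun s hs => hd 0 le_rfl s (hsub hs)) hintegr
    simp only [zero_add, Finset.range_one, Finset.sum_singleton, pow_zero, Nat.factorial_zero,
      Nat.cast_one, div_one, one_smul, one_mul]
    rw [← h1]
    refine (intervalIntegral.norm_integral_le_integral_norm ht.1).trans ?_
    refine intervalIntegral.integral_mono_interval le_rfl ht.1 ht.2 ?_ ?_
    · exact ae_of_all _ fun s => norm_nonneg _
    · refine ContinuousOn.intervalIntegrable ?_
      rw [uIcc_of_le h0h]
      exact hc.norm
  | succ n ih =>
    have ih' := ih (fun i => u (i + 1)) (fun i hi t ht => hd (i + 1) (by omega) t ht) hc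
    set I := ∫ s in (0 : ℝ)..h, ‖u (n + 1 + 1) s‖ with hI
    intro t ht
    have h0h : 0 ≤ h := ht.1.trans ht.2
    have hI0 : 0 ≤ I := intervalIntegral.integral_nonneg h0h fun s _ => norm_nonneg _
    set e : ℝ → G := fun s => u 0 s - ∑ i ∈ Finset.range (n + 1 + 1), (s ^ i / (i.factorial : ℝ)) • u i 0
      with he
    set e' : ℝ → G := fun s => u 1 s - ∑ i ∈ Finset.range (n + 1), (s ^ i / (i.factorial : ℝ)) • u (i + 1) 0
      with he'
    have hde : ∀ s ∈ Icc 0 t, HasDerivWithinAt e (e' s) (Icc 0 t) s := by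
      intro s hs
      apply HasDerivAt.hasDerivWithinAt
      refine (hd 0 (by omega) s ⟨hs.1, hs.2.trans ht.2⟩).sub ?_
      simp only [Finset.sum_range_succ' _ (n + 1)]
      have : ∀ i ∈ Finset.range (n + 1), HasDerivAt (fun s : ℝ => (s ^ (i + 1) / ((i + 1).factorial : ℝ)) • u (i + 1) 0)
          ((s ^ i / (i.factorial : ℝ)) • u (i + 1) 0) s := by
        intro i _
        refine HasDerivAt.smul_const ?_ _
        have h1 := (hasDerivAt_pow (i + 1) s).div_const ((i + 1).factorial : ℝ)
        convert! h1 using 1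
        rw [Nat.factorial_succ]
        push_cast
        have : (i.factorial : ℝ) ≠ 0 := by positivity
        field_simp
      have h2 := (HasDerivAt.fun_sum this).add_const ((s ^ 0 / ((Nat.factorial 0 : ℕ) : ℝ)) • u 0 0)
      convert! h2 using 1
    have h3 := norm_image_sub_le_of_norm_deriv_le_segment' (C := t ^ n * I) hde
      (fun s hs => by
        refine (ih' s ⟨hs.1, hs.2.le.trans ht.2⟩).trans ?_
        gcongr
        · exact hs.1
        · exact hs.2.le) t ⟨ht.1, le_rfl⟩
    have h4 : e 0 = 0 := by
      simp only [he]
      rw [Finset.sum_range_succ']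
      simp
    rw [h4, sub_zero, sub_zero] at h3
    calc ‖e t‖ ≤ t ^ n * I * t := h3
      _ = t ^ (n + 1) * I := by ring

lemma vander (K : ℕ) : ∃ c : Fin K → Fin K → ℝ, ∀ i l : Fin K,
    ∑ j, c i j * ((j : ℝ) / K) ^ (l : ℕ) = if i = l then 1 else 0 := by
  set V : Matrix (Fin K) (Fin K) ℝ := Matrix.vandermonde (fun j : Fin K => (j : ℝ) / K) with hV
  have hdet : V.det ≠ 0 := by
    rw [hV, Matrix.det_vandermonde_ne_zero_iff]
    intro a b hab
    have hK : (K : ℝ) ≠ 0 := by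
      have := a.pos
      positivity
    simp only at hab
    field_simp at hab
    exact Fin.ext (by exact_mod_cast hab)
  refine ⟨fun i j => (V⁻¹ : Matrix (Fin K) (Fin K) ℝ) i j, fun i l => ?_⟩
  have h1 : V⁻¹ * V = 1 := Matrix.nonsing_inv_mul V (isUnit_iff_ne_zero.2 hdet)
  have h2 := congrFun (congrFun h1 i) l
  rw [Matrix.mul_apply, Matrix.one_apply] at h2
  simpa [hV, Matrix.vandermonde_apply] using h2

lemma oneD (n : ℕ) : ∃ C : ℝ, 0 ≤ C ∧ ∀ (G : Type) [NormedAddCommGroup G] [NormedSpace ℝ G]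
    [CompleteSpace G] (u : ℕ → ℝ → G) (h A : ℝ), 0 < h →
    (∀ i ≤ n, ∀ t ∈ Icc 0 h, HasDerivAt (u i) (u (i + 1) t) t) →
    ContinuousOn (u (n + 1)) (Icc 0 h) → (∀ t ∈ Icc 0 h, ‖u 0 t‖ ≤ A) →
    ∀ i ≤ n, h ^ i * ‖u i 0‖ ≤ C * (A + h ^ n * ∫ s in (0 : ℝ)..h, ‖u (n + 1) s‖) := by
  obtain ⟨c, hc⟩ := vander (n + 1)
  set S : ℝ := ∑ i, ∑ j, |c i j| with hS
  have hS0 : 0 ≤ S := by positivity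
  refine ⟨(n.factorial : ℝ) * S, by positivity, ?_⟩
  intro G _ _ _ u h A hh hd hcont hA i hi
  set I := ∫ s in (0 : ℝ)..h, ‖u (n + 1) s‖ with hI
  have hI0 : 0 ≤ I := intervalIntegral.integral_nonneg hh.le fun s _ => norm_nonneg _
  have hA0 : 0 ≤ A := (norm_nonneg _).trans (hA 0 ⟨le_rfl, hh.le⟩)
  set a : Fin (n + 1) → G := fun l => (h ^ (l : ℕ) / ((l : ℕ).factorial : ℝ)) • u l 0 with ha
  set b : Fin (n + 1) → G := fun j => ∑ l : Fin (n + 1), (((j : ℝ) / (n + 1 : ℕ)) ^ (l : ℕ)) • a l with hb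
  have hbb : ∀ j, ‖b j‖ ≤ A + h ^ n * I := by
    intro j
    set t : ℝ := h * ((j : ℝ) / (n + 1 : ℕ)) with htd
    have hj1 : (j : ℝ) / (n + 1 : ℕ) ≤ 1 := by
      rw [div_le_one (by positivity)]
      exact_mod_cast j.2.le
    have hj0 : 0 ≤ (j : ℝ) / (n + 1 : ℕ) := by positivity
    have ht : t ∈ Icc 0 h := ⟨by positivity, by rw [htd]; nlinarith⟩
    have h1 := taylor_bound n u h hd hcont t ht
    have h2 : ∑ i ∈ Finset.range (n + 1), (t ^ i / (i.factorial : ℝ)) • u i 0 = b j := by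
      rw [Finset.sum_range, hb]
      refine Finset.sum_congr rfl fun l _ => ?_
      rw [ha, smul_smul, htd, mul_pow]
      congr 1
      ring
    rw [h2] at h1
    calc ‖b j‖ = ‖u 0 t - (u 0 t - b j)‖ := by rw [sub_sub_cancel]
      _ ≤ ‖u 0 t‖ + ‖u 0 t - b j‖ := norm_sub_le _ _
      _ ≤ A + t ^ n * I := add_le_add (hA t ht) h1
      _ ≤ A + h ^ n * I := by
        have := pow_le_pow_left₀ ht.1 ht.2 n
        gcongr
  have hi' : i < n + 1 := by omega
  have hai : a ⟨i, hi'⟩ = ∑ j, c ⟨i, hi'⟩ j • b j := by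
    simp only [hb, Finset.smul_sum, smul_smul]
    rw [Finset.sum_comm]
    simp_rw [← Finset.sum_smul, hc]
    simp
  have h5 : ‖a ⟨i, hi'⟩‖ ≤ S * (A + h ^ n * I) := by
    rw [hai]
    refine (norm_sum_le _ _).trans ?_
    calc ∑ j, ‖c ⟨i, hi'⟩ j • b j‖ ≤ ∑ j, |c ⟨i, hi'⟩ j| * (A + h ^ n * I) := by
          refine Finset.sum_le_sum fun j _ => ?_
          rw [norm_smul, Real.norm_eq_abs]
          gcongr
          exact hbb j
      _ = (∑ j, |c ⟨i, hi'⟩ j|) * (A + h ^ n * I) := by rw [Finset.sum_mul]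
      _ ≤ S * (A + h ^ n * I) := by
          gcongr
          exact Finset.single_le_sum (f := fun i => ∑ j, |c i j|)
            (fun i _ => by positivity) (Finset.mem_univ _)
  have hf : (0 : ℝ) < (i.factorial : ℝ) := by positivity
  have h6 : ‖a ⟨i, hi'⟩‖ = h ^ i / (i.factorial : ℝ) * ‖u i 0‖ := by
    rw [ha, norm_smul, Real.norm_of_nonneg (by positivity)]
  rw [h6] at h5
  have h7 : (i.factorial : ℝ) ≤ n.factorial := by exact_mod_cast Nat.factorial_le hi
  calc h ^ i * ‖u i 0‖ = i.factorial * (h ^ i / (i.factorial : ℝ) * ‖u i 0‖) := by field_simp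
    _ ≤ n.factorial * (S * (A + h ^ n * I)) := by gcongr
    _ = _ := by ring
section SymD
variable {E F : Type*} [NormedAddCommGroup E] [NormedSpace ℝ E] [NormedAddCommGroup F] [NormedSpace ℝ F]

lemma iter_succ_succ (n : ℕ) {f : E → F} {x : E} (v : Fin (n+2) → E) :
    iteratedFDeriv ℝ (n+2) f x v =
      fderiv ℝ (fderiv ℝ (iteratedFDeriv ℝ n f)) x (v 0) (v 1) (Fin.tail (Fin.tail v)) := by
  rw [iteratedFDeriv_succ_apply_left, iteratedFDeriv_succ_eq_comp_left]
  have h := LinearIsometryEquiv.comp_fderiv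
    (𝕜 := ℝ) (E := E →L[ℝ] ContinuousMultilinearMap ℝ (fun _ : Fin n => E) F) (F := ContinuousMultilinearMap ℝ (fun _ : Fin (n+1) => E) F)
    (iso := (continuousMultilinearCurryLeftEquiv ℝ (fun _ : Fin (n+1) => E) F).symm)
    (f := fderiv ℝ (iteratedFDeriv ℝ n f)) (x := x)
  exact congrArg (fun T => T (v 0) (Fin.tail v)) h

lemma iter_swap (n : ℕ) : ∀ {f : E → F} {x : E}, ContDiffAt ℝ (n+1 : ℕ) f x →
    ∀ (i : Fin n) (v : Fin (n+1) → E),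
    iteratedFDeriv ℝ (n+1) f x (v ∘ Equiv.swap i.castSucc i.succ) = iteratedFDeriv ℝ (n+1) f x v := by
  induction n with
  | zero => intro f x hf i; exact i.elim0
  | succ n ih =>
    intro f x hf i v
    refine Fin.cases ?_ (fun i => ?_) i
    · have h2 : ContDiffAt ℝ 2 (iteratedFDeriv ℝ n f) x := by
        apply hf.iteratedFDeriv_right
        push_cast; rw [add_assoc, add_comm]; norm_num
      have hs : IsSymmSndFDerivAt ℝ (iteratedFDeriv ℝ n f) x :=
        h2.isSymmSndFDerivAt (by simp)
      rw [iter_succ_succ, iter_succ_succ]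
      rw [hs.eq]
      have e1 : (v ∘ Equiv.swap (Fin.castSucc (0 : Fin (n+1))) (Fin.succ 0)) 0 = v 1 := by
        simp
      have e2 : (v ∘ Equiv.swap (Fin.castSucc (0 : Fin (n+1))) (Fin.succ 0)) 1 = v 0 := by
        simp
      have e3 : Fin.tail (Fin.tail (v ∘ Equiv.swap (Fin.castSucc (0 : Fin (n+1))) (Fin.succ 0)))
        = Fin.tail (Fin.tail v) := by
        funext j
        simp only [Fin.tail, Function.comp]
        rw [Equiv.swap_apply_of_ne_of_ne]
        · simp
        · intro h
          have := congrArg Fin.val h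
          simp at this
      rw [e1, e2, e3]
    · have hd : DifferentiableAt ℝ (iteratedFDeriv ℝ (n+1) f) x :=
        hf.differentiableAt_iteratedFDeriv (by exact_mod_cast Nat.lt_succ_self _)
      rw [hd.iteratedFDeriv_succ_apply_left', hd.iteratedFDeriv_succ_apply_left']
      have e1 : (v ∘ Equiv.swap (Fin.castSucc i.succ) i.succ.succ) 0 = v 0 := by
        simp only [Function.comp]
        rw [Equiv.swap_apply_of_ne_of_ne] <;> intro h <;> have := congrArg Fin.val h <;> simp at this
      have e2 : Fin.tail (v ∘ Equiv.swap (Fin.castSucc i.succ) i.succ.succ) =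
          Fin.tail v ∘ Equiv.swap i.castSucc i.succ := by
        funext j
        simp only [Fin.tail, Function.comp]
        congr 1
        rw [← Fin.succ_castSucc]
        exact (Fin.succ_injective _).swap_apply _ _ _
      rw [e1, e2]
      congr 1
      apply Filter.EventuallyEq.fderiv_eq
      have hev : ∀ᶠ y in nhds x, ContDiffAt ℝ (n+1 : ℕ) f y :=
        (hf.of_le (by exact_mod_cast Nat.le_succ _)).eventually (by simp)
      filter_upwards [hev] with y hy
      exact ih hy i _

lemma iter_perm {n : ℕ} {f : E → F} {x : E} (hf : ContDiffAt ℝ n f x) (σ : Equiv.Perm (Fin n))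
    (v : Fin n → E) :
    iteratedFDeriv ℝ n f x (v ∘ σ) = iteratedFDeriv ℝ n f x v := by
  cases n with
  | zero => congr 1; exact Subsingleton.elim _ _
  | succ n =>
    have hσ : σ ∈ Submonoid.closure (Set.range fun i : Fin n ↦ Equiv.swap i.castSucc i.succ) := by
      rw [Equiv.Perm.mclosure_swap_castSucc_succ]; trivial
    induction hσ using Submonoid.closure_induction generalizing v with
    | mem s hs => obtain ⟨i, rfl⟩ := hs; exact iter_swap n hf i v
    | one => rfl
    | mul a b _ _ ha hb =>
      have : v ∘ (a * b : Equiv.Perm _) = (v ∘ a) ∘ b := rfl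
      rw [this, hb, ha]
end SymD
section Polar

def bval (b : Bool) : ℝ := if b then 1 else 0
def bsgn (b : Bool) : ℝ := if b then 1 else -1
def ocoef {n : ℕ} (ε : Fin n → Bool) (o : Option (Fin n)) : ℝ := o.elim 1 (fun j => bval (ε j))

lemma coef_zero {n : ℕ} (r : Fin n → Option (Fin n)) (j : Fin n) (hj : ∀ i, r i ≠ some j) :
    ∑ ε : Fin n → Bool, (∏ l, bsgn (ε l)) * ∏ i, ocoef ε (r i) = 0 := by
  classical
  refine Finset.sum_involution (fun ε _ => Function.update ε j (!(ε j))) ?_ ?_ ?_ ?_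
  · intro ε _
    have h1 : ∏ i, ocoef (Function.update ε j (!(ε j))) (r i) = ∏ i, ocoef ε (r i) := by
      refine Finset.prod_congr rfl fun i _ => ?_
      have := hj i
      rcases h : r i with _ | l
      · rfl
      · have hl : l ≠ j := by rintro rfl; exact this h
        simp [ocoef, Function.update_of_ne hl]
    have h2 : ∏ l, bsgn ((Function.update ε j (!(ε j))) l) = - ∏ l, bsgn (ε l) := by
      rw [← Finset.mul_prod_erase _ _ (Finset.mem_univ j),
        ← Finset.mul_prod_erase Finset.univ (fun l => bsgn (ε l)) (Finset.mem_univ j)]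
      have : ∏ x ∈ Finset.univ.erase j, bsgn (Function.update ε j (!(ε j)) x)
          = ∏ x ∈ Finset.univ.erase j, bsgn (ε x) := by
        refine Finset.prod_congr rfl fun i hi => ?_
        rw [Function.update_of_ne (Finset.ne_of_mem_erase hi)]
      rw [this, Function.update_self]
      cases ε j <;> simp [bsgn]
    rw [h1, h2]; ring
  · intro ε _ _ h
    have := congrFun h j
    simp at this
  · intro ε _; exact Finset.mem_univ _
  · intro ε _; simp

lemma coef_one {n : ℕ} (r : Fin n → Option (Fin n)) (hj : ∀ j, ∃ i, r i = some j) :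
    ∑ ε : Fin n → Bool, (∏ l, bsgn (ε l)) * ∏ i, ocoef ε (r i) = 1 := by
  classical
  rw [Finset.sum_eq_single (fun _ => true)]
  · have : ∏ i, ocoef (fun _ => true) (r i) = 1 := by
      refine Finset.prod_eq_one fun i _ => ?_
      rcases r i with _ | l <;> simp [ocoef, bval]
    rw [this]; simp [bsgn]
  · intro ε _ hε
    obtain ⟨j, hj'⟩ : ∃ j, ε j ≠ true := by
      by_contra! h; exact hε (funext h)
    obtain ⟨i, hi⟩ := hj j
    have h0 : ∏ i, ocoef ε (r i) = 0 :=
      Finset.prod_eq_zero (i := i) (Finset.mem_univ i) (by simp [ocoef, hi, bval, hj'])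
    rw [h0, mul_zero]
  · intro h; exact absurd (Finset.mem_univ _) h

variable {E G : Type*} [NormedAddCommGroup E] [NormedSpace ℝ E] [NormedAddCommGroup G] [NormedSpace ℝ G]

lemma polar_bound {n : ℕ} (T : ContinuousMultilinearMap ℝ (fun _ : Fin n => E) G)
    (hT : ∀ (σ : Equiv.Perm (Fin n)) (v : Fin n → E), T (v ∘ σ) = T v)
    (v0 : E) (v : Fin n → E) :
    ‖T v‖ ≤ ∑ ε : Fin n → Bool, ‖T (fun _ => v0 + ∑ j, bval (ε j) • v j)‖ := by
  classical
  set u : Option (Fin n) → E := fun o => o.elim v0 v with hu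
  have hw : ∀ ε : Fin n → Bool, v0 + ∑ j, bval (ε j) • v j = ∑ o, ocoef ε o • u o := by
    intro ε
    rw [Fintype.sum_option]; simp [ocoef, hu]
  have key : ∑ ε : Fin n → Bool, (∏ l, bsgn (ε l)) • T (fun _ => v0 + ∑ j, bval (ε j) • v j)
      = ((Finset.univ.filter fun r : Fin n → Option (Fin n) => ∀ j, ∃ i, r i = some j).card : ℝ)
        • T v := by
    calc _ = ∑ ε : Fin n → Bool, ∑ r : Fin n → Option (Fin n),
          ((∏ l, bsgn (ε l)) * ∏ i, ocoef ε (r i)) • T (fun i => u (r i)) := by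
          refine Finset.sum_congr rfl fun ε _ => ?_
          rw [hw]
          rw [T.map_sum (fun _ o => ocoef ε o • u o), Finset.smul_sum]
          refine Finset.sum_congr rfl fun r _ => ?_
          rw [T.map_smul_univ (fun i => ocoef ε (r i)), smul_smul]
      _ = ∑ r : Fin n → Option (Fin n),
          (∑ ε : Fin n → Bool, (∏ l, bsgn (ε l)) * ∏ i, ocoef ε (r i)) • T (fun i => u (r i)) := by
          rw [Finset.sum_comm]
          refine Finset.sum_congr rfl fun r _ => ?_
          rw [Finset.sum_smul]
      _ = ∑ r : Fin n → Option (Fin n), if (∀ j, ∃ i, r i = some j) then T v else 0 := by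
          refine Finset.sum_congr rfl fun r _ => ?_
          split_ifs with h
          · rw [coef_one r h, one_smul]
            choose τ hτ using h
            have hinj : Function.Injective τ := by
              intro a b hab
              have := hτ a
              rw [hab, hτ b] at this
              exact (Option.some_injective _ this).symm
            have hbij := Finite.injective_iff_bijective.1 hinj
            rw [← hT (Equiv.ofBijective τ hbij)]
            congr 1
            funext i
            simp [hτ, hu]
          · push Not at h
            obtain ⟨j, hj⟩ := h
            rw [coef_zero r j hj, zero_smul]
      _ = _ := by
          rw [← Finset.sum_filter, Finset.sum_const, Nat.cast_smul_eq_nsmul]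
  have hN : 1 ≤ (Finset.univ.filter fun r : Fin n → Option (Fin n) => ∀ j, ∃ i, r i = some j).card := by
    apply Finset.card_pos.2
    exact ⟨some, by simp⟩
  calc ‖T v‖ ≤ ((Finset.univ.filter fun r : Fin n → Option (Fin n) => ∀ j, ∃ i, r i = some j).card : ℝ) * ‖T v‖ := by
        apply le_mul_of_one_le_left (norm_nonneg _)
        exact_mod_cast hN
    _ = ‖∑ ε : Fin n → Bool, (∏ l, bsgn (ε l)) • T (fun _ => v0 + ∑ j, bval (ε j) • v j)‖ := by
        rw [key, norm_smul]; simp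
    _ ≤ _ := by
        refine (norm_sum_le _ _).trans (Finset.sum_le_sum fun ε _ => ?_)
        rw [norm_smul, norm_prod]
        have : ∏ l, ‖bsgn (ε l)‖ = 1 := Finset.prod_eq_one fun l _ => by cases ε l <;> simp [bsgn]
        rw [this, one_mul]
end Polar

section Polar3

def e3 (i : Fin 3) : EuclideanSpace ℝ (Fin 3) := EuclideanSpace.single i 1

lemma norm_le_basis {G : Type*} [NormedAddCommGroup G] [NormedSpace ℝ G] {n : ℕ}
    (T : ContinuousMultilinearMap ℝ (fun _ : Fin n => EuclideanSpace ℝ (Fin 3)) G) :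
    ‖T‖ ≤ ∑ b : Fin n → Fin 3, ‖T (fun i => e3 (b i))‖ := by
  classical
  refine T.opNorm_le_bound (by positivity) fun m => ?_
  have hm : m = fun i => ∑ l, m i l • e3 l := by
    funext i
    have := (EuclideanSpace.basisFun (Fin 3) ℝ).sum_repr (m i)
    simpa [e3] using this.symm
  conv_lhs => rw [hm]
  rw [T.map_sum (fun i l => m i l • e3 l), Finset.sum_mul]
  refine (norm_sum_le _ _).trans (Finset.sum_le_sum fun b _ => ?_)
  rw [T.map_smul_univ (fun i => m i (b i)), norm_smul, mul_comm, norm_prod]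
  gcongr with i
  exact PiLp.norm_apply_le (m i) (b i)

def wdir (K : ℝ) {n : ℕ} (p : (Fin n → Fin 3) × (Fin n → Bool)) : EuclideanSpace ℝ (Fin 3) :=
  K • e3 0 + ∑ j, bval (p.2 j) • e3 (p.1 j)

lemma wdir_apply (K : ℝ) {n : ℕ} (p : (Fin n → Fin 3) × (Fin n → Bool)) (i : Fin 3) :
    wdir K p i = K * (if i = 0 then 1 else 0) + ∑ j, bval (p.2 j) * (if i = p.1 j then 1 else 0) := by
  simp [wdir, e3, Pi.single_apply]

lemma wdir_cone {L : ℝ} (hL : 0 ≤ L) {k n : ℕ} (hn : n ≤ k) (p : (Fin n → Fin 3) × (Fin n → Bool)) :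
    L * (|wdir (2 * L * k) p 1| + |wdir (2 * L * k) p 2|) ≤ wdir (2 * L * k) p 0 := by
  have hterm : ∀ i j, 0 ≤ bval (p.2 j) * (if i = p.1 j then (1:ℝ) else 0) ∧
      bval (p.2 j) * (if i = p.1 j then (1:ℝ) else 0) ≤ 1 := by
    intro i j
    cases p.2 j <;> by_cases h : i = p.1 j <;> simp [bval, h]
  have hs : ∀ i, |∑ j, bval (p.2 j) * (if i = p.1 j then (1:ℝ) else 0)| ≤ k := by
    intro i
    rw [abs_of_nonneg (Finset.sum_nonneg fun j _ => (hterm i j).1)]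
    refine (Finset.sum_le_sum fun j _ => (hterm i j).2).trans ?_
    simpa using hn
  rw [wdir_apply, wdir_apply, wdir_apply]
  have h0 : 0 ≤ ∑ j, bval (p.2 j) * (if (0:Fin 3) = p.1 j then (1:ℝ) else 0) :=
    Finset.sum_nonneg fun j _ => (hterm 0 j).1
  have h1 := hs 1
  have h2 := hs 2
  simp only [one_ne_zero, if_false, mul_zero, zero_add, if_true, mul_one,
    show (2 : Fin 3) ≠ 0 by decide]
  nlinarith

lemma exists_dirs (L : ℝ) (hL : 0 ≤ L) (k : ℕ) :
    ∃ (V : Finset (EuclideanSpace ℝ (Fin 3))) (C : ℝ), 0 ≤ C ∧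
      (∀ v ∈ V, L * (|v 1| + |v 2|) ≤ v 0) ∧
      ∀ (G : Type) [NormedAddCommGroup G] [NormedSpace ℝ G], ∀ n ≤ k,
        ∀ T : ContinuousMultilinearMap ℝ (fun _ : Fin n => EuclideanSpace ℝ (Fin 3)) G,
        (∀ (σ : Equiv.Perm (Fin n)) v, T (v ∘ σ) = T v) →
        ‖T‖ ≤ C * ∑ v ∈ V, ‖T (fun _ => v)‖ := by
  classical
  let V := (Finset.range (k+1)).biUnion fun n =>
    (Finset.univ : Finset ((Fin n → Fin 3) × (Fin n → Bool))).image (wdir (2 * L * k))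
  refine ⟨V, ∑ n ∈ Finset.range (k+1), (Fintype.card ((Fin n → Fin 3) × (Fin n → Bool)) : ℝ),
    by positivity, ?_, ?_⟩
  · intro v hv
    simp only [V, Finset.mem_biUnion, Finset.mem_image, Finset.mem_range] at hv
    obtain ⟨n, hn, p, -, rfl⟩ := hv
    exact wdir_cone hL (by omega) p
  · intro G _ _ n hn T hT
    calc ‖T‖ ≤ ∑ b : Fin n → Fin 3, ‖T (fun i => e3 (b i))‖ := norm_le_basis T
      _ ≤ ∑ b : Fin n → Fin 3, ∑ ε : Fin n → Bool, ‖T (fun _ => wdir (2 * L * k) (b, ε))‖ :=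
          Finset.sum_le_sum fun b _ => polar_bound T hT ((2 * L * k) • e3 0) _
      _ = ∑ p : (Fin n → Fin 3) × (Fin n → Bool), ‖T (fun _ => wdir (2 * L * k) p)‖ := by
          rw [Fintype.sum_prod_type]
      _ ≤ ∑ p : (Fin n → Fin 3) × (Fin n → Bool), ∑ v ∈ V, ‖T (fun _ => v)‖ := by
          refine Finset.sum_le_sum fun p _ => ?_
          refine Finset.single_le_sum (f := fun v => ‖T (fun _ => v)‖) (fun v _ => norm_nonneg _) ?_
          simp only [V, Finset.mem_biUnion, Finset.mem_image, Finset.mem_range]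
          exact ⟨n, by omega, p, Finset.mem_univ _, rfl⟩
      _ = (Fintype.card ((Fin n → Fin 3) × (Fin n → Bool)) : ℝ) * ∑ v ∈ V, ‖T (fun _ => v)‖ := by
          rw [Finset.sum_const, nsmul_eq_mul]; rfl
      _ ≤ _ := by
          refine mul_le_mul_of_nonneg_right ?_ (by positivity)
          exact Finset.single_le_sum (f := fun n => (Fintype.card ((Fin n → Fin 3) × (Fin n → Bool)) : ℝ))
            (fun _ _ => by positivity) (Finset.mem_range.2 (by omega))
end Polar3
section LipM
open scoped ENNReal

lemma sob1 {G : Type*} [NormedAddCommGroup G] [NormedSpace ℝ G] [CompleteSpace G] {φ φ' : ℝ → G}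
    (h : ∀ t, HasDerivAt φ (φ' t) t) (hc : Continuous φ') :
    ‖φ 0‖ₑ ≤ ∫⁻ t in Ioc (0:ℝ) 1, (‖φ t‖ₑ + ‖φ' t‖ₑ) := by
  have hφ : Continuous φ := continuous_iff_continuousAt.2 fun t => (h t).continuousAt
  have h1 : ∀ t ∈ Ioc (0:ℝ) 1, ‖φ 0‖ₑ ≤ ‖φ t‖ₑ + ∫⁻ s in Ioc (0:ℝ) 1, ‖φ' s‖ₑ := by
    intro t ht
    have e : ∫ s in (0:ℝ)..t, φ' s = φ t - φ 0 :=
      intervalIntegral.integral_eq_sub_of_hasDerivAt (fun s _ => h s) (hc.intervalIntegrable _ _)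
    have e2 : φ 0 = φ t - ∫ s in (0:ℝ)..t, φ' s := by rw [e]; abel
    calc ‖φ 0‖ₑ = ‖φ t - ∫ s in (0:ℝ)..t, φ' s‖ₑ := by rw [← e2]
      _ ≤ ‖φ t‖ₑ + ‖∫ s in (0:ℝ)..t, φ' s‖ₑ := enorm_sub_le
      _ ≤ _ := by
        gcongr
        rw [intervalIntegral.integral_of_le ht.1.le]
        refine (enorm_integral_le_lintegral_enorm _).trans ?_
        exact lintegral_mono_set (Ioc_subset_Ioc_right ht.2)
  calc ‖φ 0‖ₑ = ∫⁻ t in Ioc (0:ℝ) 1, ‖φ 0‖ₑ := by simp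
    _ ≤ ∫⁻ t in Ioc (0:ℝ) 1, (‖φ t‖ₑ + ∫⁻ s in Ioc (0:ℝ) 1, ‖φ' s‖ₑ) :=
        setLIntegral_mono' measurableSet_Ioc h1
    _ = _ := by
        rw [lintegral_add_left hφ.enorm.measurable, lintegral_add_left hφ.enorm.measurable]
        simp

lemma lint_E2 (Φ : EuclideanSpace ℝ (Fin 2) → ℝ≥0∞) (hΦ : Measurable Φ) (x : EuclideanSpace ℝ (Fin 2)) :
    ∫⁻ t : ℝ, (∫⁻ s : ℝ, Φ (x + t • EuclideanSpace.single 0 1 + s • EuclideanSpace.single 1 1))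
      = ∫⁻ y, Φ y := by
  have h1 := (volume_preserving_finTwoArrow ℝ).symm
  have h2 := PiLp.volume_preserving_toLp (Fin 2)
  have h3 := h2.comp h1
  rw [← lintegral_add_left_eq_self Φ x, ← h3.lintegral_comp (by fun_prop), Measure.volume_eq_prod,
    lintegral_prod _ (by
      apply Measurable.aemeasurable
      exact (hΦ.comp (measurable_const_add x)).comp h3.measurable)]
  refine lintegral_congr fun t => lintegral_congr fun s => ?_
  congr 1
  rw [add_assoc]
  congr 1
  ext i
  fin_cases i <;> simp [MeasurableEquiv.finTwoArrow]

lemma sobE2 {G : Type*} [NormedAddCommGroup G] [NormedSpace ℝ G] [CompleteSpace G]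
    {U : EuclideanSpace ℝ (Fin 2) → G} (hU : ContDiff ℝ 1 U) (e x : EuclideanSpace ℝ (Fin 2))
    (he : ‖e‖ ≤ 1) :
    ‖U x‖ₑ ≤ ∫⁻ t in Ioc (0:ℝ) 1, (‖U (x + t • e)‖ₑ + ‖fderiv ℝ U (x + t • e)‖ₑ) := by
  have hd : ∀ t : ℝ, HasDerivAt (fun t : ℝ => U (x + t • e)) (fderiv ℝ U (x + t • e) e) t := by
    intro t
    have h1 : HasFDerivAt U (fderiv ℝ U (x + t • e)) (x + t • e) :=
      (hU.differentiable (by norm_num) _).hasFDerivAt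
    have h2 : HasDerivAt (fun t : ℝ => x + t • e) e t := by
      simpa using ((hasDerivAt_id t).smul_const e).const_add x
    exact h1.comp_hasDerivAt t h2
  have hc : Continuous (fderiv ℝ U) := hU.continuous_fderiv (by norm_num)
  have := sob1 hd (by fun_prop)
  simp only [zero_smul, add_zero] at this
  refine this.trans (lintegral_mono fun t => ?_)
  gcongr
  have : ‖fderiv ℝ U (x + t • e) e‖ ≤ ‖fderiv ℝ U (x + t • e)‖ := by
    refine (ContinuousLinearMap.le_opNorm _ _).trans ?_
    exact mul_le_of_le_one_right (norm_nonneg _) he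
  rw [enorm_le_iff_norm_le]; exact this

lemma enorm_le_one_add_sq (a : ℝ≥0∞) : a ≤ 1 + a ^ 2 := by
  rcases le_total a 1 with h | h
  · exact h.trans le_self_add
  · calc a = a * 1 := by simp
      _ ≤ a * a := by gcongr
      _ = a ^ 2 := (sq a).symm
      _ ≤ _ := le_add_self

lemma bounded_grad (M : EuclideanSpace ℝ (Fin 2) → ℝ) (hM : ContDiff ℝ (⊤ : ℕ∞) M)
    (hMint : ∀ j ≤ 9, Integrable fun x' : EuclideanSpace ℝ (Fin 2) => ‖iteratedFDeriv ℝ j M x'‖ ^ 2) :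
    ∃ L : ℝ, 0 ≤ L ∧ ∀ x, ‖fderiv ℝ M x‖ ≤ L := by
  set P : ℕ → EuclideanSpace ℝ (Fin 2) → ℝ≥0∞ := fun j y => ‖iteratedFDeriv ℝ j M y‖ₑ with hP
  have hcont : ∀ j, Continuous (iteratedFDeriv ℝ j M) := fun j =>
    hM.continuous_iteratedFDeriv (by exact_mod_cast le_top)
  have hPm : ∀ j, Measurable (P j) := fun j => (hcont j).enorm.measurable
  have hfin : ∀ j ≤ 9, ∫⁻ y, P j y ^ 2 < ∞ := by
    intro j hj
    have := (hMint j hj).2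
    rw [HasFiniteIntegral] at this
    simpa [hP, enorm_pow] using this
  have step : ∀ j (e x : EuclideanSpace ℝ (Fin 2)), ‖e‖ ≤ 1 →
      P j x ≤ ∫⁻ t in Ioc (0:ℝ) 1, (P j (x + t • e) + P (j+1) (x + t • e)) := by
    intro j e x he
    have hU : ContDiff ℝ 1 (iteratedFDeriv ℝ j M) := 
      hM.iteratedFDeriv_right (by exact_mod_cast le_top)
    have := sobE2 hU e x he
    have e1 : ∀ y, ‖fderiv ℝ (iteratedFDeriv ℝ j M) y‖ₑ = P (j+1) y := by
      intro y
      rw [← enorm_norm, norm_fderiv_iteratedFDeriv, enorm_norm]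
    simpa only [e1] using this
  set e0 : EuclideanSpace ℝ (Fin 2) := EuclideanSpace.single 0 1
  set e1 : EuclideanSpace ℝ (Fin 2) := EuclideanSpace.single 1 1
  have he0 : ‖e0‖ ≤ 1 := by simp [e0]
  have he1 : ‖e1‖ ≤ 1 := by simp [e1]
  set Q : EuclideanSpace ℝ (Fin 2) → ℝ≥0∞ := fun y => P 1 y ^ 2 + P 2 y ^ 2 + (P 2 y ^ 2 + P 3 y ^ 2)
  have hQm : Measurable Q := by
    have := hPm 1; have := hPm 2; have := hPm 3
    fun_prop
  have hQ : ∫⁻ y, Q y < ∞ := by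
    have := hPm 1; have := hPm 2; have := hPm 3
    simp only [Q]
    rw [lintegral_add_left (by fun_prop), lintegral_add_left (by fun_prop), lintegral_add_left (by fun_prop)]
    have := hfin 1 (by norm_num); have := hfin 2 (by norm_num); have := hfin 3 (by norm_num)
    simp only [ENNReal.add_lt_top]
    exact ⟨⟨by assumption, by assumption⟩, by assumption, by assumption⟩
  have main : ∀ x, P 1 x ≤ 4 + ∫⁻ y, Q y := by
    intro x
    calc P 1 x ≤ ∫⁻ t in Ioc (0:ℝ) 1, (P 1 (x + t • e0) + P 2 (x + t • e0)) := step 1 e0 x he0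
      _ ≤ ∫⁻ t in Ioc (0:ℝ) 1, (4 + ∫⁻ s : ℝ, Q (x + t • e0 + s • e1)) := by
          refine lintegral_mono fun t => ?_
          calc P 1 (x + t • e0) + P 2 (x + t • e0) 
              ≤ (∫⁻ s in Ioc (0:ℝ) 1, (P 1 (x + t • e0 + s • e1) + P 2 (x + t • e0 + s • e1)))
                + ∫⁻ s in Ioc (0:ℝ) 1, (P 2 (x + t • e0 + s • e1) + P 3 (x + t • e0 + s • e1)) :=
                add_le_add (step 1 e1 _ he1) (step 2 e1 _ he1)
            _ = ∫⁻ s in Ioc (0:ℝ) 1, ((P 1 (x + t • e0 + s • e1) + P 2 (x + t • e0 + s • e1))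
                + (P 2 (x + t • e0 + s • e1) + P 3 (x + t • e0 + s • e1))) := by
                have := hPm 1; have := hPm 2; have := hPm 3
                symm
                rw [lintegral_add_left (by fun_prop)]
            _ ≤ ∫⁻ s in Ioc (0:ℝ) 1, (4 + Q (x + t • e0 + s • e1)) := by
                refine lintegral_mono fun s => ?_
                set y := x + t • e0 + s • e1
                calc P 1 y + P 2 y + (P 2 y + P 3 y) 
                    ≤ (1 + P 1 y ^ 2) + (1 + P 2 y ^ 2) + ((1 + P 2 y ^ 2) + (1 + P 3 y ^ 2)) := by
                      gcongr <;> exact enorm_le_one_add_sq _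
                  _ = 4 + Q y := by simp only [Q]; ring
            _ = 4 + ∫⁻ s in Ioc (0:ℝ) 1, Q (x + t • e0 + s • e1) := by
                rw [lintegral_add_left (by fun_prop)]; simp
            _ ≤ _ := by gcongr; exact Measure.restrict_le_self
      _ = 4 + ∫⁻ t in Ioc (0:ℝ) 1, (∫⁻ s : ℝ, Q (x + t • e0 + s • e1)) := by
          rw [lintegral_add_left (by fun_prop)]; simp
      _ ≤ 4 + ∫⁻ t : ℝ, (∫⁻ s : ℝ, Q (x + t • e0 + s • e1)) := by
          gcongr; exact Measure.restrict_le_self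
      _ = _ := by rw [lint_E2 Q hQm x]
  refine ⟨(4 + ∫⁻ y, Q y).toReal, ENNReal.toReal_nonneg, fun x => ?_⟩
  rw [← norm_iteratedFDeriv_one]
  have := ENNReal.toReal_mono (by finiteness) (main x)
  simpa [hP] using this

lemma lipM (M : EuclideanSpace ℝ (Fin 2) → ℝ) (hM : ContDiff ℝ (⊤ : ℕ∞) M)
    (hMint : ∀ j ≤ 9, Integrable fun x' : EuclideanSpace ℝ (Fin 2) => ‖iteratedFDeriv ℝ j M x'‖ ^ 2) :
    ∃ L : ℝ, 0 ≤ L ∧ ∀ x y, |M y - M x| ≤ L * ‖y - x‖ := by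
  obtain ⟨L, hL, h⟩ := bounded_grad M hM hMint
  refine ⟨L, hL, fun x y => ?_⟩
  have := Convex.norm_image_sub_le_of_norm_fderiv_le (𝕜 := ℝ) (f := M) (s := univ) (C := L)
    (fun z _ => hM.differentiable (by simp) z) (fun z _ => h z) convex_univ (mem_univ x) (mem_univ y)
  simpa using this
end LipM
section GN
open scoped NNReal

lemma ennreal_add_sq (a b : ℝ≥0∞) : (a + b) ^ 2 ≤ 4 * (a ^ 2 + b ^ 2) := by
  rcases le_total a b with h | h
  · calc (a + b) ^ 2 ≤ (b + b) ^ 2 := by gcongr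
      _ = 4 * b ^ 2 := by ring
      _ ≤ _ := by gcongr; exact le_add_self
  · calc (a + b) ^ 2 ≤ (a + a) ^ 2 := by gcongr
      _ = 4 * a ^ 2 := by ring
      _ ≤ _ := by gcongr; exact le_self_add

def maxF (V : Finset (EuclideanSpace ℝ (Fin 3))) (w : EuclideanSpace ℝ (Fin 3) → ℝ≥0∞)
    (x : EuclideanSpace ℝ (Fin 3)) : ℝ≥0∞ := w x + ∑ v ∈ V, maxop v w x

lemma maxF_meas (V : Finset (EuclideanSpace ℝ (Fin 3))) {w : EuclideanSpace ℝ (Fin 3) → ℝ≥0∞}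
    (hw : Measurable w) : Measurable (maxF V w) :=
  hw.add (Finset.measurable_fun_sum _ fun v _ => maxop_meas v hw)

lemma maxF_L2 (V : Finset (EuclideanSpace ℝ (Fin 3))) :
    ∃ C : ℝ≥0, ∀ w : EuclideanSpace ℝ (Fin 3) → ℝ≥0∞, Measurable w →
      ∫⁻ x, maxF V w x ^ 2 ≤ C * ∫⁻ x, w x ^ 2 := by
  classical
  have aux : ∀ (a b : EuclideanSpace ℝ (Fin 3) → ℝ≥0∞), Measurable a → Measurable b →
      ∫⁻ x, (a x + b x) ^ 2 ≤ 4 * ((∫⁻ x, a x ^ 2) + ∫⁻ x, b x ^ 2) := by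
    intro a b ha hb
    rw [← lintegral_add_left (by fun_prop), ← lintegral_const_mul _ (by fun_prop)]
    exact lintegral_mono fun x => ennreal_add_sq _ _
  induction V using Finset.induction_on with
  | empty => exact ⟨1, fun w hw => by simp [maxF]⟩
  | insert v V hv ih =>
    obtain ⟨C, hC⟩ := ih
    refine ⟨4 * (16 + C), fun w hw => ?_⟩
    have e : ∀ x, maxF (insert v V) w x = maxop v w x + maxF V w x := by
      intro x; simp only [maxF, Finset.sum_insert hv]; ring
    simp only [e]
    refine (aux _ _ (maxop_meas v hw) (maxF_meas V hw)).trans ?_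
    calc 4 * ((∫⁻ x, maxop v w x ^ 2) + ∫⁻ x, maxF V w x ^ 2) 
        ≤ 4 * (16 * (∫⁻ x, w x ^ 2) + C * ∫⁻ x, w x ^ 2) := by
          gcongr
          · exact maxop_L2 v hw
          · exact hC w hw
      _ = _ := by push_cast; ring

variable {G : Type} [NormedAddCommGroup G] [NormedSpace ℝ G]

lemma hasDeriv_line {k i : ℕ} (hi : i < k) {U : EuclideanSpace ℝ (Fin 3) → G}
    {x v : EuclideanSpace ℝ (Fin 3)} {t : ℝ} (hU : ContDiffAt ℝ k U (x + t • v)) :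
    HasDerivAt (fun t : ℝ => iteratedFDeriv ℝ i U (x + t • v) (fun _ => v))
      (iteratedFDeriv ℝ (i+1) U (x + t • v) (fun _ => v)) t := by
  have hd : DifferentiableAt ℝ (iteratedFDeriv ℝ i U) (x + t • v) :=
    hU.differentiableAt_iteratedFDeriv (by exact_mod_cast hi)
  rw [hd.iteratedFDeriv_succ_apply_left']
  have h1 : HasFDerivAt (fun y => iteratedFDeriv ℝ i U y (fun _ => v))
      (fderiv ℝ (fun y => iteratedFDeriv ℝ i U y (fun _ => v)) (x + t • v)) (x + t • v) := by
    apply DifferentiableAt.hasFDerivAt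
    exact hd.continuousMultilinear_apply_const _
  have h2 : HasDerivAt (fun t : ℝ => x + t • v) v t := by
    simpa using ((hasDerivAt_id t).smul_const v).const_add x
  exact h1.comp_hasDerivAt t h2

lemma line_bound (n : ℕ) : ∃ C : ℝ, 0 ≤ C ∧ ∀ (G : Type) [NormedAddCommGroup G] [NormedSpace ℝ G]
    [CompleteSpace G] (O : Set (EuclideanSpace ℝ (Fin 3))) (U : EuclideanSpace ℝ (Fin 3) → G) (A : ℝ)
    (v x : EuclideanSpace ℝ (Fin 3)), IsOpen O →
    ContDiffOn ℝ (n+1 : ℕ) U O → (∀ y ∈ O, ‖U y‖ ≤ A) → (∀ t : ℝ, 0 ≤ t → x + t • v ∈ O) →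
    maxop v (O.indicator fun y => ‖iteratedFDeriv ℝ (n+1) U y‖ₑ) x ≠ ∞ →
    ∀ h : ℝ, 0 < h → ∀ i ≤ n, h ^ i * ‖iteratedFDeriv ℝ i U x (fun _ => v)‖ ≤
      C * (A + ‖v‖ ^ (n+1) * h ^ (n+1) *
        (maxop v (O.indicator fun y => ‖iteratedFDeriv ℝ (n+1) U y‖ₑ) x).toReal) := by
  obtain ⟨C, hC0, hC⟩ := oneD n
  refine ⟨C * 2, by positivity, ?_⟩
  intro G _ _ _ O U A v x hO hU hA hx hfin h hh i hi
  have hat : ∀ t : ℝ, 0 ≤ t → ContDiffAt ℝ (n+1 : ℕ) U (x + t • v) := fun t ht =>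
    hU.contDiffAt (hO.mem_nhds (hx t ht))
  have hcont : ContinuousOn (fun t : ℝ => iteratedFDeriv ℝ (n+1) U (x + t • v)) (Icc 0 h) := by
    intro t ht
    apply ContinuousAt.continuousWithinAt
    have h1 : ContinuousAt (iteratedFDeriv ℝ (n+1) U) (x + t • v) :=
      (hat t ht.1).continuousAt_iteratedFDeriv le_rfl
    exact ContinuousAt.comp (f := fun t : ℝ => x + t • v) (x := t) h1 (by fun_prop)
  have key := hC G (fun i t => iteratedFDeriv ℝ i U (x + t • v) (fun _ => v)) h A hh
    (fun i hi t ht => hasDeriv_line (by omega) (hat t ht.1))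
    (by
      intro t ht
      exact ((ContinuousMultilinearMap.apply ℝ (fun _ : Fin (n+1) => EuclideanSpace ℝ (Fin 3)) G
        (fun _ => v)).continuous.continuousAt.comp_continuousWithinAt (hcont t ht)))
    (by intro t ht; simpa using hA _ (hx t ht.1)) i hi
  simp only [zero_smul, add_zero] at key
  set m := maxop v (O.indicator fun y => ‖iteratedFDeriv ℝ (n+1) U y‖ₑ) x
  have hintegr : ∫ s in (0:ℝ)..h, ‖iteratedFDeriv ℝ (n+1) U (x + s • v)‖ ≤ 2 * h * m.toReal := by
    rw [intervalIntegral.integral_of_le hh.le, integral_eq_lintegral_of_nonneg_ae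
      (Eventually.of_forall fun _ => norm_nonneg _)
      ((hcont.norm.mono Ioc_subset_Icc_self).aestronglyMeasurable measurableSet_Ioc)]
    have h1 := avg_le_maxop v (O.indicator fun y => ‖iteratedFDeriv ℝ (n+1) U y‖ₑ) hh x
    have h2 : ∫⁻ s in Ioc (0:ℝ) h, ENNReal.ofReal ‖iteratedFDeriv ℝ (n+1) U (x + s • v)‖
        = ∫⁻ t in Ioc (0 : ℝ) h, (O.indicator fun y => ‖iteratedFDeriv ℝ (n+1) U y‖ₑ) (x + t • v) := by
      refine setLIntegral_congr_fun measurableSet_Ioc fun t ht => ?_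
      simp only [indicator_of_mem (hx t ht.1.le), ofReal_norm]
    rw [h2]
    refine (ENNReal.toReal_mono (ENNReal.mul_ne_top (by finiteness) hfin) h1).trans ?_
    rw [ENNReal.toReal_mul, ENNReal.toReal_ofReal (by positivity)]
  have hintegrB : ∫ s in (0:ℝ)..h, ‖iteratedFDeriv ℝ (n+1) U (x + s • v) (fun _ => v)‖
      ≤ ‖v‖ ^ (n+1) * (2 * h * m.toReal) := by
    refine le_trans ?_ (mul_le_mul_of_nonneg_left hintegr (by positivity))
    rw [← intervalIntegral.integral_const_mul]
    have c1 : ContinuousOn (fun s : ℝ => iteratedFDeriv ℝ (n+1) U (x + s • v) (fun _ => v)) (Icc 0 h) := by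
      intro t ht
      exact ((ContinuousMultilinearMap.apply ℝ (fun _ : Fin (n+1) => EuclideanSpace ℝ (Fin 3)) G
        (fun _ => v)).continuous.continuousAt.comp_continuousWithinAt (hcont t ht))
    refine intervalIntegral.integral_mono_on hh.le ?_ ?_ ?_
    · apply ContinuousOn.intervalIntegrable
      rw [uIcc_of_le hh.le]
      exact c1.norm
    · apply ContinuousOn.intervalIntegrable
      rw [uIcc_of_le hh.le]
      exact continuousOn_const.mul hcont.norm
    · intro s hs
      refine (ContinuousMultilinearMap.le_opNorm _ _).trans (le_of_eq ?_)
      simp [mul_comm]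
  have hA0 : 0 ≤ A := (norm_nonneg _).trans (hA _ (hx 0 le_rfl))
  calc _ ≤ _ := key
    _ ≤ C * (A + h ^ n * (‖v‖ ^ (n+1) * (2 * h * m.toReal))) := by gcongr
    _ = C * (A + 2 * (‖v‖ ^ (n+1) * h ^ (n+1) * m.toReal)) := by ring
    _ ≤ C * (2 * A + 2 * (‖v‖ ^ (n+1) * h ^ (n+1) * m.toReal)) := by gcongr; linarith
    _ = _ := by ring

lemma gn_pointwise (L : ℝ) (hL : 0 ≤ L) (k : ℕ) :
    ∃ (V : Finset (EuclideanSpace ℝ (Fin 3))) (C : ℝ), 0 ≤ C ∧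
      (∀ v ∈ V, L * (|v 1| + |v 2|) ≤ v 0) ∧
      ∀ (G : Type) [NormedAddCommGroup G] [NormedSpace ℝ G] [CompleteSpace G]
        (O : Set (EuclideanSpace ℝ (Fin 3))) (U : EuclideanSpace ℝ (Fin 3) → G) (A : ℝ),
        IsOpen O → ContDiffOn ℝ k U O → (∀ y ∈ O, ‖U y‖ ≤ A) →
        (∀ x ∈ O, ∀ v ∈ V, ∀ t : ℝ, 0 ≤ t → x + t • v ∈ O) →
        ∀ x ∈ O, maxF V (O.indicator fun y => ‖iteratedFDeriv ℝ k U y‖ₑ) x ≠ ∞ →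
        ∀ h : ℝ, 0 < h → ∀ i ≤ k, h ^ i * ‖iteratedFDeriv ℝ i U x‖ ≤
          C * (A + h ^ k * (maxF V (O.indicator fun y => ‖iteratedFDeriv ℝ k U y‖ₑ) x).toReal) := by
  obtain ⟨V, C1, hC1, hV, hpol⟩ := exists_dirs L hL k
  cases k with
  | zero =>
    refine ⟨V, 1, by norm_num, hV, ?_⟩
    intro G _ _ _ O U A hO hU hA hcone x hx hfin h hh i hi
    obtain rfl : i = 0 := by omega
    have := hA x hx
    simp only [pow_zero, one_mul, norm_iteratedFDeriv_zero]
    exact this.trans (le_add_of_nonneg_right ENNReal.toReal_nonneg)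
  | succ n =>
    obtain ⟨C2, hC2, hline⟩ := line_bound n
    refine ⟨V, C1 * (C2 * ∑ v ∈ V, (1 + ‖v‖ ^ (n+1))) + 1, by positivity, hV, ?_⟩
    intro G _ _ _ O U A hO hU hA hcone x hx hfin h hh i hi
    set w := O.indicator fun y => ‖iteratedFDeriv ℝ (n+1) U y‖ₑ with hw
    have hA0 : 0 ≤ A := (norm_nonneg _).trans (hA x hx)
    set m := (maxF V w x).toReal with hm
    have hm0 : 0 ≤ m := ENNReal.toReal_nonneg
    have hD : 0 ≤ A + h ^ (n+1) * m := by positivity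
    rcases hi.lt_or_eq with hlt | rfl
    · have hmv : ∀ v ∈ V, maxop v w x ≤ maxF V w x := fun v hv =>
        (Finset.single_le_sum (f := fun v => maxop v w x) (fun _ _ => zero_le) hv).trans le_add_self
      have hb : ∀ v ∈ V, h ^ i * ‖iteratedFDeriv ℝ i U x (fun _ => v)‖ ≤
          C2 * (1 + ‖v‖ ^ (n+1)) * (A + h ^ (n+1) * m) := by
        intro v hv
        have hne := ne_top_of_le_ne_top hfin (hmv v hv)
        have h1 := hline G O U A v x hO hU hA (hcone x hx v hv) hne h hh i (by omega)
        have h2 : (maxop v w x).toReal ≤ m := ENNReal.toReal_mono hfin (hmv v hv)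
        refine h1.trans ?_
        rw [mul_assoc C2]
        refine mul_le_mul_of_nonneg_left ?_ hC2
        have h3 : ‖v‖ ^ (n+1) * h ^ (n+1) * (maxop v w x).toReal ≤ ‖v‖ ^ (n+1) * h ^ (n+1) * m := by
          gcongr
        have h4 : 0 ≤ h ^ (n+1) * m := by positivity
        have h5 : 0 ≤ ‖v‖ ^ (n+1) * A := by positivity
        nlinarith
      have hsym : ∀ (σ : Equiv.Perm (Fin i)) v,
          iteratedFDeriv ℝ i U x (v ∘ σ) = iteratedFDeriv ℝ i U x v := fun σ v =>
        iter_perm ((hU.contDiffAt (hO.mem_nhds hx)).of_le (by exact_mod_cast hi)) σ v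
      calc h ^ i * ‖iteratedFDeriv ℝ i U x‖ 
          ≤ h ^ i * (C1 * ∑ v ∈ V, ‖iteratedFDeriv ℝ i U x (fun _ => v)‖) := by
            gcongr; exact hpol G i hi _ hsym
        _ = C1 * ∑ v ∈ V, h ^ i * ‖iteratedFDeriv ℝ i U x (fun _ => v)‖ := by
            rw [Finset.mul_sum, Finset.mul_sum, Finset.mul_sum]
            exact Finset.sum_congr rfl fun _ _ => by ring
        _ ≤ C1 * ∑ v ∈ V, C2 * (1 + ‖v‖ ^ (n+1)) * (A + h ^ (n+1) * m) := by
            exact mul_le_mul_of_nonneg_left (Finset.sum_le_sum hb) hC1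
        _ = C1 * (C2 * ∑ v ∈ V, (1 + ‖v‖ ^ (n+1))) * (A + h ^ (n+1) * m) := by
            rw [← Finset.sum_mul, ← Finset.mul_sum]; ring
        _ ≤ _ := by gcongr; linarith
    · have h1 : ‖iteratedFDeriv ℝ (n+1) U x‖ ≤ m := by
        have : ‖iteratedFDeriv ℝ (n+1) U x‖ₑ ≤ maxF V w x := by
          have : w x = ‖iteratedFDeriv ℝ (n+1) U x‖ₑ := by rw [hw, indicator_of_mem hx]
          rw [← this]; exact le_self_add
        simpa using ENNReal.toReal_mono hfin this
      calc h ^ (n+1) * ‖iteratedFDeriv ℝ (n+1) U x‖ ≤ h ^ (n+1) * m := by gcongr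
        _ ≤ 1 * (A + h ^ (n+1) * m) := by linarith
        _ ≤ _ := by
          gcongr
          have : 0 ≤ C1 * (C2 * ∑ v ∈ V, (1 + ‖v‖ ^ (n+1))) := by positivity
          linarith
end GN
section Prod

lemma prod_opt {k i : ℕ} (hi : i ≤ k) (hk : 0 < k) {C A B φ γ X Y : ℝ} (hA : 0 ≤ A)
    (hB : 0 ≤ B) (hφ : 0 ≤ φ) (hγ : 0 ≤ γ) (hX : 0 ≤ X) (hY : 0 ≤ Y)
    (h1 : ∀ h : ℝ, 0 < h → h ^ i * X ≤ C * (A + h ^ k * φ))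
    (h2 : ∀ h : ℝ, 0 < h → h ^ (k - i) * Y ≤ C * (B + h ^ k * γ)) :
    X * Y ≤ 2 * C ^ 2 * (A * γ + φ * B) := by
  have main : ∀ δ : ℝ, 0 < δ → X * Y ≤ 2 * C ^ 2 * ((A + δ) * γ + (φ + δ) * B) := by
    intro δ hδ
    have hA' : 0 < A + δ := by positivity
    have hφ' : 0 < φ + δ := by positivity
    set s := (A + δ) / (φ + δ) with hs
    have hs0 : 0 < s := by positivity
    set h := s ^ ((k : ℝ)⁻¹) with hh
    have hh0 : 0 < h := Real.rpow_pos_of_pos hs0 _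
    have hhk : h ^ k = s := Real.rpow_inv_natCast_pow hs0.le hk.ne'
    have e1 := h1 h hh0
    have e2 := h2 h hh0
    have e3 : (h ^ i * X) * (h ^ (k - i) * Y) ≤ (C * (A + h ^ k * φ)) * (C * (B + h ^ k * γ)) :=
      mul_le_mul e1 e2 (by positivity) (le_trans (by positivity) e1)
    have e4 : (h ^ i * X) * (h ^ (k - i) * Y) = s * (X * Y) := by
      rw [← hhk, ← Nat.add_sub_cancel' hi, pow_add, Nat.add_sub_cancel_left]; ring
    rw [e4, hhk] at e3
    have e5 : s * (φ + δ) = A + δ := by rw [hs]; field_simp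
    have e6 : (A + s * φ) * (B + s * γ) ≤ s * (2 * ((A + δ) * γ + (φ + δ) * B)) := by
      have : A + s * φ ≤ 2 * (A + δ) := by nlinarith
      have e7 : (A + s * φ) * (B + s * γ) ≤ (2 * (A + δ)) * (B + s * γ) := by gcongr
      refine e7.trans (le_of_eq ?_)
      have : (A + δ) * B = s * ((φ + δ) * B) := by rw [← mul_assoc, e5]
      linear_combination 2 * this
    have e8 : s * (X * Y) ≤ s * (2 * C ^ 2 * ((A + δ) * γ + (φ + δ) * B)) := by
      calc _ ≤ _ := e3
        _ = C ^ 2 * ((A + s * φ) * (B + s * γ)) := by ring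
        _ ≤ C ^ 2 * (s * (2 * ((A + δ) * γ + (φ + δ) * B))) := by gcongr
        _ = _ := by ring
    exact le_of_mul_le_mul_left e8 hs0
  have ht : Tendsto (fun δ : ℝ => 2 * C ^ 2 * ((A + δ) * γ + (φ + δ) * B)) (nhdsWithin 0 (Ioi 0))
      (nhds (2 * C ^ 2 * ((A + 0) * γ + (φ + 0) * B))) := by
    apply Tendsto.mono_left _ nhdsWithin_le_nhds
    apply Continuous.tendsto
    fun_prop
  have := ge_of_tendsto ht (eventually_mem_nhdsWithin.mono fun δ hδ => main δ hδ)
  simpa using this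

end Prod
section Assembly
open scoped NNReal

lemma comm_bound {k : ℕ} {O : Set E3} (hO : IsOpen O) {f g : E3 → ℝ}
    (hf : ContDiffOn ℝ (k + 1 : ℕ) f O) (hg : ContDiffOn ℝ (k + 1 : ℕ) g O) {x : E3} (hx : x ∈ O) :
    ‖iteratedFDeriv ℝ (k + 1) (fun y => f y * g y) x - f x • iteratedFDeriv ℝ (k + 1) g x‖ ≤
      ∑ i ∈ Finset.range (k + 1), ((k + 1).choose (i + 1) : ℝ) *
        (‖iteratedFDeriv ℝ i (fderiv ℝ f) x‖ * ‖iteratedFDeriv ℝ (k - i) g x‖) := by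
  have hfx := hf.contDiffAt (hO.mem_nhds hx)
  have hgx := hg.contDiffAt (hO.mem_nhds hx)
  have e1 : iteratedFDeriv ℝ (k + 1) (fun y => f y * g y) x - f x • iteratedFDeriv ℝ (k + 1) g x
      = iteratedFDeriv ℝ (k + 1) (fun y => (f y - f x) * g y) x := by
    rw [← iteratedFDeriv_const_smul_apply' hgx, ← fun_iteratedFDeriv_sub_apply (hfx.mul hgx)
      (hgx.const_smul (f x))]
    congr 1
    funext y
    simp; ring
  have hf1 : ContDiffOn ℝ (k + 1 : ℕ) (fun y => f y - f x) O := hf.sub contDiffOn_const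
  have h := norm_iteratedFDerivWithin_mul_le hf1 hg hO.uniqueDiffOn hx (n := k + 1) le_rfl
  simp only [iteratedFDerivWithin_of_isOpen _ hO hx] at h
  rw [e1]
  refine h.trans (le_of_eq ?_)
  rw [Finset.sum_range_succ']
  simp only [norm_iteratedFDeriv_zero, sub_self, norm_zero, mul_zero, zero_mul, add_zero]
  refine Finset.sum_congr rfl fun i _ => ?_
  rw [← norm_iteratedFDeriv_fderiv, Nat.add_sub_add_right, mul_assoc]
  congr 3
  have : fderiv ℝ (fun y => f y - f x) = fderiv ℝ f := by
    funext y; exact fderiv_sub_const _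
  rw [this]

lemma w_meas {G : Type} [NormedAddCommGroup G] [NormedSpace ℝ G] {k : ℕ} {O : Set E3}
    (hO : IsOpen O) {U : E3 → G} (hU : ContDiffOn ℝ k U O) :
    Measurable (O.indicator fun y => ‖iteratedFDeriv ℝ k U y‖ₑ) := by
  classical
  rw [← piecewise_eq_indicator]
  refine ContinuousOn.measurable_piecewise ?_ continuousOn_const hO.measurableSet
  have h := hU.continuousOn_iteratedFDerivWithin le_rfl hO.uniqueDiffOn
  exact (h.congr fun x hx => (iteratedFDerivWithin_of_isOpen k hO hx).symm).enorm

lemma maxF_data {G : Type} [NormedAddCommGroup G] [NormedSpace ℝ G] {k : ℕ} {O : Set E3}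
    (hO : IsOpen O) {U : E3 → G} (hU : ContDiffOn ℝ k U O)
    (hintegr : IntegrableOn (fun x => ‖iteratedFDeriv ℝ k U x‖ ^ 2) O) (V : Finset E3) (C : ℝ≥0)
    (hC : ∀ w : E3 → ℝ≥0∞, Measurable w → ∫⁻ x, maxF V w x ^ 2 ≤ C * ∫⁻ x, w x ^ 2)
    (Φ : E3 → ℝ≥0∞) (hΦ : Φ = maxF V (O.indicator fun y => ‖iteratedFDeriv ℝ k U y‖ₑ)) :
    (∀ᵐ x, Φ x ≠ ∞) ∧ IntegrableOn (fun x => (Φ x).toReal ^ 2) O ∧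
      ∫ x in O, (Φ x).toReal ^ 2 ≤ C * ∫ x in O, ‖iteratedFDeriv ℝ k U x‖ ^ 2 := by
  have hw := w_meas hO hU
  have hm : Measurable Φ := hΦ ▸ maxF_meas V hw
  have h1 := hC _ hw
  rw [← hΦ] at h1
  have h2 : ∫⁻ x, (O.indicator (fun y => ‖iteratedFDeriv ℝ k U y‖ₑ) x) ^ 2
      = ENNReal.ofReal (∫ x in O, ‖iteratedFDeriv ℝ k U x‖ ^ 2) := by
    rw [ofReal_integral_eq_lintegral_ofReal hintegr (Eventually.of_forall fun x => by positivity),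
      ← lintegral_indicator hO.measurableSet]
    refine lintegral_congr fun x => ?_
    by_cases hx : x ∈ O
    · rw [indicator_of_mem hx, indicator_of_mem hx, ENNReal.ofReal_pow (norm_nonneg _), ofReal_norm]
    · rw [indicator_of_notMem hx, indicator_of_notMem hx]; simp
  rw [h2] at h1
  have h3 : ∫⁻ x, Φ x ^ 2 ≠ ∞ := ne_top_of_le_ne_top (by finiteness) h1
  have h4 : ∀ᵐ x, Φ x ^ 2 < ∞ := ae_lt_top (by fun_prop) h3
  have h5 : Integrable (fun x => (Φ x ^ 2).toReal) :=
    integrable_toReal_of_lintegral_ne_top (by fun_prop) h3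
  simp only [ENNReal.toReal_pow] at h5
  refine ⟨h4.mono fun x hx => ?_, h5.integrableOn, ?_⟩
  · rintro h; simp [h] at hx
  · calc ∫ x in O, (Φ x).toReal ^ 2 ≤ ∫ x, (Φ x).toReal ^ 2 :=
          setIntegral_le_integral h5 (Eventually.of_forall fun x => by positivity)
      _ = (∫⁻ x, Φ x ^ 2).toReal := by
          rw [← integral_toReal (by fun_prop) h4]; simp only [ENNReal.toReal_pow]
      _ ≤ (C * ENNReal.ofReal (∫ x in O, ‖iteratedFDeriv ℝ k U x‖ ^ 2)).toReal :=
          ENNReal.toReal_mono (by finiteness) h1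
      _ = _ := by
          rw [ENNReal.toReal_mul, ENNReal.toReal_ofReal (integral_nonneg fun x => by positivity)]
          rfl

lemma proj2_cont : Continuous proj2 := by
  unfold proj2
  refine (PiLp.continuous_toLp 2 (fun _ : Fin 2 => ℝ)).comp ?_
  refine continuous_pi fun i => ?_
  fin_cases i
  · exact (EuclideanSpace.proj (𝕜 := ℝ) (1 : Fin 3)).continuous
  · exact (EuclideanSpace.proj (𝕜 := ℝ) (2 : Fin 3)).continuous

lemma omg_open {M : E2 → ℝ} (hM : Continuous M) : IsOpen (Omg M) :=
  isOpen_lt (hM.comp proj2_cont) (EuclideanSpace.proj (𝕜 := ℝ) (0 : Fin 3)).continuous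

lemma omg_nonempty (M : E2 → ℝ) : (Omg M).Nonempty := by
  refine ⟨WithLp.toLp 2 ![M 0 + 1, 0, 0], ?_⟩
  have : proj2 (WithLp.toLp 2 ![M 0 + 1, 0, 0]) = 0 := by
    ext i; fin_cases i <;> simp [proj2]
  simp only [Omg, mem_ofPred_eq, this]
  simp

lemma omg_cone {M : E2 → ℝ} {L : ℝ} (hL : 0 ≤ L) (hM : ∀ x y, |M y - M x| ≤ L * ‖y - x‖)
    {v x : E3} (hv : L * (|v 1| + |v 2|) ≤ v 0) (hx : x ∈ Omg M) {t : ℝ} (ht : 0 ≤ t) :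
    x + t • v ∈ Omg M := by
  simp only [Omg, mem_ofPred_eq] at hx ⊢
  have h1 := (abs_le.1 (hM (proj2 x) (proj2 (x + t • v)))).2
  have h2 : ‖proj2 (x + t • v) - proj2 x‖ ≤ t * (|v 1| + |v 2|) := by
    rw [EuclideanSpace.norm_eq]
    apply Real.sqrt_le_iff.2
    refine ⟨by positivity, ?_⟩
    simp [proj2, Fin.sum_univ_two]
    nlinarith [sq_abs (v 1), sq_abs (v 2), mul_nonneg (abs_nonneg (v 1)) (abs_nonneg (v 2)),
      mul_nonneg (sq_nonneg t) (mul_nonneg (abs_nonneg (v 1)) (abs_nonneg (v 2)))]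
  have h3 : L * ‖proj2 (x + t • v) - proj2 x‖ ≤ t * v 0 := by
    calc _ ≤ L * (t * (|v 1| + |v 2|)) := by gcongr
      _ = t * (L * (|v 1| + |v 2|)) := by ring
      _ ≤ _ := by gcongr
  have h4 : (x + t • v) 0 = x 0 + t * v 0 := by simp
  rw [h4]
  linarith

lemma sobNorm_ge {F : Type} [NormedAddCommGroup F] [NormedSpace ℝ F] (m : ℕ) (O : Set E3)
    (f : E3 → F) : ∫ x in O, ‖iteratedFDeriv ℝ m f x‖ ^ 2 ≤ sobNorm m O f ^ 2 := by
  have h0 : ∀ j, 0 ≤ ∫ x in O, ‖iteratedFDeriv ℝ j f x‖ ^ 2 := fun j =>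
    integral_nonneg fun x => by positivity
  rw [sobNorm, Real.sq_sqrt (Finset.sum_nonneg fun j _ => h0 j)]
  exact Finset.single_le_sum (f := fun j => ∫ x in O, ‖iteratedFDeriv ℝ j f x‖ ^ 2)
    (fun j _ => h0 j) (Finset.mem_range.2 (Nat.lt_succ_self m))

end Assembly

theorem commutator_estimate (M : E2 → ℝ) (hM : ContDiff ℝ (⊤ : ℕ∞) M)
    (hMint : ∀ j ≤ 9, Integrable fun x' : E2 => ‖iteratedFDeriv ℝ j M x'‖ ^ 2)
    (k : ℕ) :
    ∃ C : ℝ, 0 < C ∧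
      ∀ (f g : E3 → ℝ) (A B : ℝ),
        ContDiffOn ℝ (k + 1) f (closure (Omg M)) →
        ContDiffOn ℝ (k + 1) g (closure (Omg M)) →
        (∀ x ∈ Omg M, ‖fderiv ℝ f x‖ ≤ A) →
        (∀ x ∈ Omg M, |g x| ≤ B) →
        (∀ j ≤ k, IntegrableOn (fun x => ‖iteratedFDeriv ℝ j (fderiv ℝ f) x‖ ^ 2) (Omg M)) →
        (∀ j ≤ k, IntegrableOn (fun x => ‖iteratedFDeriv ℝ j g x‖ ^ 2) (Omg M)) →
        Real.sqrt (∫ x in Omg M,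
            ‖iteratedFDeriv ℝ (k + 1) (fun y => f y * g y) x
              - f x • iteratedFDeriv ℝ (k + 1) g x‖ ^ 2) ≤
          C * (A * sobNorm k (Omg M) g + sobNorm k (Omg M) (fderiv ℝ f) * B) := by
  obtain ⟨L, hL, hlip⟩ := lipM M hM hMint
  obtain ⟨V, C, hC0, hV, hgn⟩ := gn_pointwise L hL k
  obtain ⟨C', hC'⟩ := maxF_L2 V
  set K : ℝ := (∑ i ∈ Finset.range (k + 1), ((k + 1).choose (i + 1) : ℝ)) * (2 * C ^ 2 + 1) with hK
  have hK0 : 0 ≤ K := by positivity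
  refine ⟨Real.sqrt (2 * K ^ 2 * C') + 1, by positivity, ?_⟩
  intro f g A B hf hg hA hB hIF hIg
  have hO : IsOpen (Omg M) := omg_open hM.continuous
  set O := Omg M with hOdef
  have hf' : ContDiffOn ℝ (k + 1 : ℕ) f O := by
    push_cast; exact hf.mono subset_closure
  have hg' : ContDiffOn ℝ (k + 1 : ℕ) g O := by
    push_cast; exact hg.mono subset_closure
  have hF : ContDiffOn ℝ k (fderiv ℝ f) O := hf'.fderiv_of_isOpen hO (by push_cast; exact le_rfl)
  have hgk : ContDiffOn ℝ k g O := hg'.of_le (by exact_mod_cast Nat.le_succ k)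
  obtain ⟨x0, hx0⟩ := omg_nonempty M
  have hA0 : 0 ≤ A := (norm_nonneg _).trans (hA x0 hx0)
  have hB0 : 0 ≤ B := (abs_nonneg _).trans (hB x0 hx0)
  have hcone : ∀ x ∈ O, ∀ v ∈ V, ∀ t : ℝ, 0 ≤ t → x + t • v ∈ O := fun x hx v hv t ht =>
    omg_cone hL hlip (hV v hv) hx ht
  obtain ⟨Φ, hΦ⟩ : ∃ Φ, Φ = maxF V (O.indicator fun y => ‖iteratedFDeriv ℝ k (fderiv ℝ f) y‖ₑ) :=
    ⟨_, rfl⟩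
  obtain ⟨Γ, hΓ⟩ : ∃ Γ, Γ = maxF V (O.indicator fun y => ‖iteratedFDeriv ℝ k g y‖ₑ) := ⟨_, rfl⟩
  obtain ⟨hΦ1, hΦ2, hΦ3⟩ := maxF_data hO hF (hIF k le_rfl) V C' hC' Φ hΦ
  obtain ⟨hΓ1, hΓ2, hΓ3⟩ := maxF_data hO hgk (hIg k le_rfl) V C' hC' Γ hΓ
  have hpt : ∀ x ∈ O, Φ x ≠ ∞ → Γ x ≠ ∞ → ∀ i ≤ k,
      ‖iteratedFDeriv ℝ i (fderiv ℝ f) x‖ * ‖iteratedFDeriv ℝ (k - i) g x‖ ≤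
        (2 * C ^ 2 + 1) * (A * (Γ x).toReal + (Φ x).toReal * B) := by
    intro x hx hΦx hΓx i hi
    have hpos : 0 ≤ A * (Γ x).toReal + (Φ x).toReal * B := by positivity
    rcases Nat.eq_zero_or_pos k with rfl | hk
    · obtain rfl : i = 0 := by omega
      have h1 : ‖iteratedFDeriv ℝ 0 g x‖ ≤ (Γ x).toReal := by
        have : ‖iteratedFDeriv ℝ 0 g x‖ₑ ≤ Γ x := by
          rw [hΓ, maxF, indicator_of_mem hx]; exact le_self_add
        simpa only [toReal_enorm] using ENNReal.toReal_mono hΓx this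
      calc _ ≤ A * (Γ x).toReal := by
            refine mul_le_mul ?_ h1 (norm_nonneg _) hA0
            simpa only [norm_iteratedFDeriv_zero] using hA x hx
        _ ≤ 1 * (A * (Γ x).toReal + (Φ x).toReal * B) := by
            have : 0 ≤ (Φ x).toReal * B := by positivity
            linarith
        _ ≤ _ := by gcongr; nlinarith [sq_nonneg C]
    · have h1 := hgn _ O (fderiv ℝ f) A hO hF hA hcone x hx (hΦ ▸ hΦx)
      have h2 := hgn _ O g B hO hgk hB hcone x hx (hΓ ▸ hΓx)
      rw [← hΦ] at h1
      rw [← hΓ] at h2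
      have := prod_opt hi hk hA0 hB0 (ENNReal.toReal_nonneg (a := Φ x))
        (ENNReal.toReal_nonneg (a := Γ x)) (norm_nonneg (iteratedFDeriv ℝ i (fderiv ℝ f) x))
        (norm_nonneg (iteratedFDeriv ℝ (k - i) g x))
        (fun h hh => h1 h hh i hi) (fun h hh => h2 h hh (k - i) (Nat.sub_le _ _))
      refine this.trans ?_
      gcongr
      linarith
  have hcomm : ∀ x ∈ O, Φ x ≠ ∞ → Γ x ≠ ∞ →
      ‖iteratedFDeriv ℝ (k + 1) (fun y => f y * g y) x - f x • iteratedFDeriv ℝ (k + 1) g x‖ ^ 2 ≤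
        2 * K ^ 2 * (A ^ 2 * (Γ x).toReal ^ 2 + B ^ 2 * (Φ x).toReal ^ 2) := by
    intro x hx hΦx hΓx
    have h1 : ‖iteratedFDeriv ℝ (k + 1) (fun y => f y * g y) x
        - f x • iteratedFDeriv ℝ (k + 1) g x‖ ≤ K * (A * (Γ x).toReal + (Φ x).toReal * B) := by
      refine (comm_bound hO hf' hg' hx).trans ?_
      rw [hK, mul_assoc, Finset.sum_mul]
      refine Finset.sum_le_sum fun i hi => ?_
      refine mul_le_mul_of_nonneg_left ?_ (by positivity)
      exact hpt x hx hΦx hΓx i (by have := Finset.mem_range.1 hi; omega)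
    calc _ ≤ (K * (A * (Γ x).toReal + (Φ x).toReal * B)) ^ 2 := by gcongr
      _ ≤ _ := by
        have := mul_nonneg (sq_nonneg K) (sq_nonneg (A * (Γ x).toReal - (Φ x).toReal * B))
        nlinarith
  set Ng := sobNorm k O g with hNg
  set Nf := sobNorm k O (fderiv ℝ f) with hNf
  have hNg0 : 0 ≤ Ng := Real.sqrt_nonneg _
  have hNf0 : 0 ≤ Nf := Real.sqrt_nonneg _
  have hI : ∫ x in O, ‖iteratedFDeriv ℝ (k + 1) (fun y => f y * g y) x
      - f x • iteratedFDeriv ℝ (k + 1) g x‖ ^ 2 ≤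
      2 * K ^ 2 * C' * (A ^ 2 * Ng ^ 2 + B ^ 2 * Nf ^ 2) := by
    calc _ ≤ ∫ x in O, 2 * K ^ 2 * (A ^ 2 * (Γ x).toReal ^ 2 + B ^ 2 * (Φ x).toReal ^ 2) := by
          refine integral_mono_of_nonneg (Eventually.of_forall fun x => by positivity) ?_ ?_
          · exact ((hΓ2.const_mul _).add (hΦ2.const_mul _)).const_mul _
          · rw [EventuallyLE, ae_restrict_iff' hO.measurableSet]
            filter_upwards [hΦ1, hΓ1] with x h1 h2 hx
            exact hcomm x hx h1 h2
      _ = 2 * K ^ 2 * (A ^ 2 * (∫ x in O, (Γ x).toReal ^ 2) + B ^ 2 * ∫ x in O, (Φ x).toReal ^ 2) := by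
          rw [integral_const_mul, integral_add (hΓ2.const_mul _) (hΦ2.const_mul _),
            integral_const_mul, integral_const_mul]
      _ ≤ 2 * K ^ 2 * (A ^ 2 * (C' * Ng ^ 2) + B ^ 2 * (C' * Nf ^ 2)) := by
          have h1 := hΓ3.trans (mul_le_mul_of_nonneg_left (sobNorm_ge k O g) C'.2)
          have h2 := hΦ3.trans (mul_le_mul_of_nonneg_left (sobNorm_ge k O (fderiv ℝ f)) C'.2)
          gcongr
      _ = _ := by ring
  calc _ ≤ Real.sqrt (2 * K ^ 2 * C' * (A * Ng + Nf * B) ^ 2) := by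
        apply Real.sqrt_le_sqrt
        refine hI.trans ?_
        refine mul_le_mul_of_nonneg_left ?_ (by positivity)
        have : 0 ≤ (A * Ng) * (Nf * B) := by positivity
        nlinarith
    _ = Real.sqrt (2 * K ^ 2 * C') * (A * Ng + Nf * B) := by
        rw [Real.sqrt_mul (by positivity), Real.sqrt_sq (by positivity)]
    _ ≤ _ := by gcongr; linarith
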